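/- arXiv:0912.5273 — 2 statements merged into one kernel-verified Lean document; each statement's English description precedes it below -/
import Mathlib

section
/- Let L = D^{2n-2} + ∑_{i=1}^{n-1} D^{-1}(u^i D^{2i-1} + D^{2i-1} u^i) + D^{-1}ρD^{-1}ρ be a pseudo-differential operator of the first type over the algebra of differential polynomials in u^1, …, u^{n-1}, ρ. Then there exists a unique P ∈ D⁻ of the form P = D + u₁D^{-1} + u₂D^{-2} + ⋯ with P^{2n-2} = L, and this P satisfies [P, L] = 0 and P* = −DPD^{-1}. -/
/-!
Coefficient functions bounded above in order, with the product `mulM`, form an associative ring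
(`Psd.PDO`), and the formal adjoint is an anti-homomorphism of it (`Psd.adj_mul`). Both facts are
additive identities whose `s`-th coefficient ignores terms of very low order, so they only need to
be checked on monomials `a D^i` (`Psd.eq_of_mon`). Associativity further reduces to
`(D x) y = D (x y)` (`Psd.D_mul_assoc`), which is Pascal's rule, because `D` is left cancellable and
every monomial is a scalar times a power of `D`. The adjoint is treated in the same way through
`(D x)* = -x* D` (`Psd.adj_D_mul`).

Put `m = 2n - 2`. If `x` and `y` are monic of order one and `y - x = e D^j + ⋯`, then
`y ^ m - x ^ m = m e D^{j+m-1} + ⋯` (`Psd.pow_sub_pow`). As `m` is invertible in `A`, this gives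
uniqueness of the root by descending induction on the order of the difference
(`Psd.root_unique`), and existence by correcting one coefficient at a time (`Psd.root_exists`); the
latter needs that `L` has no `D^{m-1}` term, which is where the shape `D + O(D⁻¹)` comes from. The
commutation `[P, L] = 0` is clear from `L = P ^ m`.

Finally `L = D⁻¹ S` with `S` skew-adjoint (`Psd.adj_SOp`), hence `L* = S D⁻¹ = D L D⁻¹`. Since `m`
is even, `-D⁻¹ P* D` is another monic `m`-th root of `L` without constant term, so it equals `P`
(`Psd.adj_root`), which is the symmetry `P* = -D P D⁻¹`.
-/

open scoped BigOperators

/-- Generalized binomial coefficient `C(i,r) = i(i-1)⋯(i-r+1)/r!` for `i : ℤ`, `r : ℕ`. -/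
noncomputable def zchoose (i : ℤ) (r : ℕ) : ℤ :=
  (∏ k ∈ Finset.range r, (i - (k : ℤ))) / (r.factorial : ℤ)

/-- A derivation of a commutative ring: additive and Leibniz. -/
def IsDeriv {A : Type*} [CommRing A] (d : A → A) : Prop :=
  (∀ x y, d (x + y) = d x + d y) ∧ (∀ x y, d (x * y) = d x * y + x * d y)

section FirstType

variable {A : Type*} [CommRing A]

/-- Coefficients supported on `{i ≤ N}` for some `N`: pseudo-differential operators of the
first type `∑_{i ≤ N} f_i D^i` are represented by their coefficient functions `ℤ → A`. -/
def BddAboveSupp (f : ℤ → A) : Prop := ∃ N : ℤ, ∀ i : ℤ, N < i → f i = 0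

/-- Coefficient of `D^s` in the product `(∑ f_i D^i)·(∑ g_j D^j)
 = ∑_{i,j,r≥0} C(i,r) f_i D^r(g_j) D^{i+j-r}` (here `r = i + j - s ≥ 0`). -/
noncomputable def mulM (d : A → A) (f g : ℤ → A) : ℤ → A :=
  fun s => ∑ᶠ p : ℤ × ℤ,
    if s ≤ p.1 + p.2 then
      zchoose p.1 (p.1 + p.2 - s).toNat • (f p.1 * d^[(p.1 + p.2 - s).toNat] (g p.2))
    else 0

def oneM : ℤ → A := fun i => if i = 0 then 1 else 0

noncomputable def powM (d : A → A) (f : ℤ → A) : ℕ → ℤ → A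
  | 0 => oneM
  | n + 1 => mulM d f (powM d f n)

/-- Formal adjoint `(∑ f_i D^i)* = ∑ (-1)^i D^i ∘ f_i` in coefficient form. -/
noncomputable def adjM (d : A → A) (f : ℤ → A) : ℤ → A :=
  fun s => ∑ᶠ r : ℕ,
    (if Even (s + (r : ℤ)) then zchoose (s + (r : ℤ)) r else -zchoose (s + (r : ℤ)) r) •
      d^[r] (f (s + (r : ℤ)))

/-- Nonnegative (differential-operator) part. -/
def posM (f : ℤ → A) : ℤ → A := fun i => if 0 ≤ i then f i else 0

/-- Strictly negative part. -/
def negM (f : ℤ → A) : ℤ → A := fun i => if i < 0 then f i else 0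

/-- Action of a differential operator `∑_{i ≥ 0} f_i D^i` on an element of `A`. -/
noncomputable def actM (d : A → A) (f : ℤ → A) (x : A) : A :=
  ∑ᶠ i : ℕ, f (i : ℤ) * d^[i] x

/-- The monomial `D^k`. -/
def Dk (k : ℤ) : ℤ → A := fun i => if i = k then 1 else 0

/-- `D^{-1}`. -/
def Dinv : ℤ → A := Dk (-1)

/-- A scalar `u ∈ A` viewed as an operator of order `0`. -/
def cst (u : A) : ℤ → A := fun i => if i = 0 then u else 0

/-- The Drinfeld–Sokolov operator
`L = D^{2n-2} + ∑_{i=1}^{n-1} D^{-1}(u^i D^{2i-1} + D^{2i-1} u^i) + D^{-1} ρ D^{-1} ρ`. -/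
noncomputable def LM (d : A → A) (n : ℕ) (u : Fin (n - 1) → A) (ρ : A) : ℤ → A :=
  fun s =>
    Dk (2 * (n : ℤ) - 2) s
      + (∑ i : Fin (n - 1),
          mulM d Dinv
            (fun t => mulM d (cst (u i)) (Dk (2 * ((i : ℕ) : ℤ) + 1)) t
                + mulM d (Dk (2 * ((i : ℕ) : ℤ) + 1)) (cst (u i)) t) s)
      + mulM d Dinv (mulM d (cst ρ) (mulM d Dinv (cst ρ))) s

end FirstType

section SecondType

variable {A : Type*} [CommRing A]

/-- Operators over a graded ring, in bi-graded coefficient form: `a i j` is the coefficient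
of `D^i` lying in the degree-`j` graded component, so the operator is `∑_{i,j} a_{i,j} D^i`. -/
abbrev OpC (A : Type*) := ℤ → ℕ → A

/-- Product of operators in bi-graded coefficient form:
`A·B = ∑ C(i,r) a_{i,p} D^r(b_{j,q}) D^{i+j-r}`; the `(s,t)` coefficient collects
`i + j - r = s` and `p + r + q = t`. -/
noncomputable def mulO (d : A → A) (a b : OpC A) : OpC A :=
  fun s t => ∑ᶠ (i : ℤ) (p : ℕ) (r : ℕ) (q : ℕ),
    if p + r + q = t then zchoose i r • (a i p * d^[r] (b (s + (r : ℤ) - i) q)) else 0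

def oneO : OpC A := fun i j => if i = 0 ∧ j = 0 then 1 else 0

noncomputable def powO (d : A → A) (a : OpC A) : ℕ → OpC A
  | 0 => oneO
  | n + 1 => mulO d a (powO d a n)

/-- Formal adjoint `A* = ∑ (-1)^i D^i ∘ a_{i,j}` in bi-graded coefficient form. -/
noncomputable def adjO (d : A → A) (a : OpC A) : OpC A :=
  fun s t => ∑ r ∈ Finset.range (t + 1),
    (if Even (s + (r : ℤ)) then zchoose (s + (r : ℤ)) r else -zchoose (s + (r : ℤ)) r) •
      d^[r] (a (s + (r : ℤ)) (t - r))

def posO (a : OpC A) : OpC A := fun i j => if 0 ≤ i then a i j else 0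

def negO (a : OpC A) : OpC A := fun i j => if i < 0 then a i j else 0

def DkO (k : ℤ) : OpC A := fun i j => if i = k ∧ j = 0 then 1 else 0

def DopO : OpC A := DkO 1

def DinvO : OpC A := DkO (-1)

/-- A scalar, given by its graded components `fc j ∈ A_j`, as an operator of order `0`. -/
def scalarO (fc : ℕ → A) : OpC A := fun i j => if i = 0 then fc j else 0

/-- The components of `1 ∈ A`. -/
def unitC : ℕ → A := fun j => if j = 0 then (1 : A) else 0

/-- Action of a differential operator on an element of `A` given by graded components. -/
noncomputable def actO (d : A → A) (a : OpC A) (fc : ℕ → A) : ℕ → A :=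
  fun t => ∑ i ∈ Finset.range (t + 1), ∑ j ∈ Finset.range (t + 1), ∑ p ∈ Finset.range (t + 1),
    if i + j + p = t then a (i : ℤ) j * d^[i] (fc p) else 0

/-- Gradedness: `a i j` lies in the degree-`j` component. -/
def IsGradedO (𝒜 : ℕ → AddSubgroup A) (a : OpC A) : Prop := ∀ i j, a i j ∈ 𝒜 j

/-- Membership in `D⁺`: `∃ m`, support in `{(i,j) : j ≥ max(0, m - i)}`. -/
def InPlusO (a : OpC A) : Prop := ∃ m : ℤ, ∀ (i : ℤ) (j : ℕ), (j : ℤ) < m - i → a i j = 0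

/-- Membership in `D⁻`: `∃ N`, support in `{(i,j) : i ≤ N}`. -/
def InMinusO (a : OpC A) : Prop := ∃ N : ℤ, ∀ (i : ℤ) (j : ℕ), N < i → a i j = 0

/-- A differential operator: no negative powers of `D`. -/
def IsDiffOpO (a : OpC A) : Prop := ∀ i : ℤ, i < 0 → ∀ j, a i j = 0

/-- Apply a map (e.g. a time derivation) to all coefficients. -/
def opMapO {A : Type*} (e : A → A) (a : OpC A) : OpC A := fun i j => e (a i j)

/-- Commutator. -/
noncomputable def commO (d : A → A) (a b : OpC A) : OpC A :=
  fun i j => mulO d a b i j - mulO d b a i j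

/-- The Drinfeld–Sokolov operator `L` in bi-graded coefficient form. -/
noncomputable def LO (d : A → A) (n : ℕ) (uc : Fin (n - 1) → ℕ → A) (ρc : ℕ → A) : OpC A :=
  fun s t =>
    DkO (2 * (n : ℤ) - 2) s t
      + (∑ i : Fin (n - 1),
          mulO d DinvO
            (fun s' t' => mulO d (scalarO (uc i)) (DkO (2 * ((i : ℕ) : ℤ) + 1)) s' t'
                + mulO d (DkO (2 * ((i : ℕ) : ℤ) + 1)) (scalarO (uc i)) s' t') s t)
      + mulO d DinvO (mulO d (scalarO ρc) (mulO d DinvO (scalarO ρc))) s t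

end SecondType

namespace Psd

/-! ### Integer binomial coefficients -/

theorem zchoose_eq (i : ℤ) (r : ℕ) : zchoose i r = Ring.choose i r := by
  have h := Ring.descPochhammer_eq_factorial_smul_choose i r
  rw [← Polynomial.eval_eq_smeval, descPochhammer_eval_eq_prod_range, nsmul_eq_mul] at h
  rw [zchoose, h]
  exact Int.mul_ediv_cancel_left _ (by exact_mod_cast r.factorial_ne_zero)

@[simp] theorem zchoose_zero (i : ℤ) : zchoose i 0 = 1 := by
  rw [zchoose_eq, Ring.choose_zero_right]

@[simp] theorem zchoose_zero_succ (r : ℕ) : zchoose 0 (r + 1) = 0 := by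
  rw [zchoose_eq, Ring.choose_zero_succ]

theorem zchoose_succ_succ (i : ℤ) (r : ℕ) :
    zchoose (i + 1) (r + 1) = zchoose i r + zchoose i (r + 1) := by
  simp only [zchoose_eq, Ring.choose_succ_succ]

section Coefficients

variable {A : Type*} [CommRing A] {d : A → A}

/-! ### The derivation and its iterates -/

theorem d_zero (hd : IsDeriv d) : d 0 = 0 := by
  have := hd.1 0 0
  simpa using this

theorem d_one (hd : IsDeriv d) : d 1 = 0 := by
  have := hd.2 1 1
  simpa using this

/-- The derivation as an additive homomorphism. -/
def dHom (hd : IsDeriv d) : A →+ A := AddMonoidHom.mk' d hd.1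

theorem d_zsmul (hd : IsDeriv d) (k : ℤ) (x : A) : d (k • x) = k • d x :=
  map_zsmul (dHom hd) k x

theorem iter_zero (hd : IsDeriv d) (r : ℕ) : d^[r] 0 = 0 :=
  iterate_map_zero (dHom hd) r

theorem iter_add (hd : IsDeriv d) (r : ℕ) (x y : A) : d^[r] (x + y) = d^[r] x + d^[r] y :=
  iterate_map_add (dHom hd) r x y

theorem iter_one (hd : IsDeriv d) (r : ℕ) : d^[r + 1] 1 = 0 := by
  rw [Function.iterate_succ_apply, d_one hd, iter_zero hd]

/-! ### Coefficient functions of bounded order -/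

/-- `f` has order at most `N`: its coefficients vanish above `N`. -/
def OrdLe (f : ℤ → A) (N : ℤ) : Prop := ∀ i, N < i → f i = 0

theorem OrdLe.mono {f : ℤ → A} {M N : ℤ} (h : OrdLe f M) (hMN : M ≤ N) : OrdLe f N :=
  fun i hi => h i (lt_of_le_of_lt hMN hi)

theorem OrdLe.add {f g : ℤ → A} {N : ℤ} (hf : OrdLe f N) (hg : OrdLe g N) :
    OrdLe (f + g) N := fun i hi => by simp [hf i hi, hg i hi]

theorem OrdLe.neg {f : ℤ → A} {N : ℤ} (hf : OrdLe f N) : OrdLe (-f) N :=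
  fun i hi => by simp [hf i hi]

theorem OrdLe.sub {f g : ℤ → A} {N : ℤ} (hf : OrdLe f N) (hg : OrdLe g N) :
    OrdLe (f - g) N := by
  rw [sub_eq_add_neg]; exact hf.add hg.neg

/-- The summand of index `p` in the `s`-th coefficient of a product. -/
noncomputable def mulTerm (d : A → A) (f g : ℤ → A) (s : ℤ) (p : ℤ × ℤ) : A :=
  if s ≤ p.1 + p.2 then
    zchoose p.1 (p.1 + p.2 - s).toNat • (f p.1 * d^[(p.1 + p.2 - s).toNat] (g p.2))
  else 0

theorem mulM_eq (f g : ℤ → A) (s : ℤ) : mulM d f g s = ∑ᶠ p, mulTerm d f g s p := rfl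

theorem mulTerm_eq_zero (hd : IsDeriv d) {f g : ℤ → A} {s : ℤ} {p : ℤ × ℤ}
    (h : p.1 + p.2 < s ∨ f p.1 = 0 ∨ g p.2 = 0) : mulTerm d f g s p = 0 := by
  unfold mulTerm
  split_ifs with hs
  · rcases h with h | h | h
    · omega
    · simp [h]
    · simp [h, iter_zero hd]
  · rfl

theorem mulTerm_finite (hd : IsDeriv d) {f g : ℤ → A} {N M : ℤ} (hf : OrdLe f N)
    (hg : OrdLe g M) (s : ℤ) : (Function.support (mulTerm d f g s)).Finite := by
  refine (Set.finite_Icc ((s - M, s - N) : ℤ × ℤ) (N, M)).subset fun p hp => ?_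
  have h1 : ¬ p.1 + p.2 < s := fun h => hp (mulTerm_eq_zero hd (Or.inl h))
  have h2 : ¬ N < p.1 := fun h => hp (mulTerm_eq_zero hd (Or.inr (Or.inl (hf _ h))))
  have h3 : ¬ M < p.2 := fun h => hp (mulTerm_eq_zero hd (Or.inr (Or.inr (hg _ h))))
  simp only [Set.mem_Icc, Prod.le_def]
  omega

theorem mulM_add_left (hd : IsDeriv d) {f f' g : ℤ → A} {N N' M : ℤ} (hf : OrdLe f N)
    (hf' : OrdLe f' N') (hg : OrdLe g M) : mulM d (f + f') g = mulM d f g + mulM d f' g := by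
  funext s
  rw [Pi.add_apply, mulM_eq, mulM_eq, mulM_eq,
    ← finsum_add_distrib (mulTerm_finite hd hf hg s) (mulTerm_finite hd hf' hg s)]
  refine finsum_congr fun p => ?_
  unfold mulTerm
  split_ifs <;> simp [add_mul]

theorem mulM_add_right (hd : IsDeriv d) {f g g' : ℤ → A} {N M M' : ℤ} (hf : OrdLe f N)
    (hg : OrdLe g M) (hg' : OrdLe g' M') :
    mulM d f (g + g') = mulM d f g + mulM d f g' := by
  funext s
  rw [Pi.add_apply, mulM_eq, mulM_eq, mulM_eq,
    ← finsum_add_distrib (mulTerm_finite hd hf hg s) (mulTerm_finite hd hf hg' s)]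
  refine finsum_congr fun p => ?_
  unfold mulTerm
  split_ifs <;> simp [mul_add, iter_add hd]

theorem mulM_ordLe (hd : IsDeriv d) {f g : ℤ → A} {N M : ℤ} (hf : OrdLe f N)
    (hg : OrdLe g M) : OrdLe (mulM d f g) (N + M) := fun s hs => by
  rw [mulM_eq]
  refine finsum_eq_zero_of_forall_eq_zero fun p => mulTerm_eq_zero hd ?_
  by_cases h1 : p.1 + p.2 < s
  · exact Or.inl h1
  · by_cases h2 : N < p.1
    · exact Or.inr (Or.inl (hf _ h2))
    · exact Or.inr (Or.inr (hg _ (by omega)))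

theorem mulM_top (hd : IsDeriv d) {f g : ℤ → A} {N M : ℤ} (hf : OrdLe f N)
    (hg : OrdLe g M) : mulM d f g (N + M) = f N * g M := by
  rw [mulM_eq, finsum_eq_single _ ((N, M) : ℤ × ℤ)]
  · simp [mulTerm]
  · rintro ⟨i, j⟩ hp
    apply mulTerm_eq_zero hd
    by_contra! h
    have h1 : ¬ N < i := fun h' => h.2.1 (hf _ h')
    have h2 : ¬ M < j := fun h' => h.2.2 (hg _ h')
    have h3 := h.1
    exact hp (Prod.ext (by simp at *; omega) (by simp at *; omega))

/-! ### The ring of pseudo-differential operators -/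

variable (A) in
/-- The additive group of coefficient functions bounded above in order. -/
def bdd : AddSubgroup (ℤ → A) where
  carrier := {f | ∃ N, OrdLe f N}
  add_mem' := by
    rintro f g ⟨N, hf⟩ ⟨M, hg⟩
    exact ⟨max N M, (hf.mono (le_max_left _ _)).add (hg.mono (le_max_right _ _))⟩
  zero_mem' := ⟨0, fun _ _ => rfl⟩
  neg_mem' := by
    rintro f ⟨N, hf⟩
    exact ⟨N, hf.neg⟩

/-- Pseudo-differential operators of the first type over the differential ring `(A, d)`, given by
their coefficients. The hypothesis `hd` is an index of the type because the ring laws of the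
product depend on it. -/
def PDO {A : Type*} [CommRing A] {d : A → A} (_hd : IsDeriv d) : Type _ := bdd A

variable (hd : IsDeriv d)

noncomputable instance : AddCommGroup (PDO hd) := inferInstanceAs (AddCommGroup (bdd A))

/-- The coefficients of an operator. -/
def coeff : PDO hd →+ (ℤ → A) := (bdd A).subtype

variable {hd}

theorem coeff_inj {x y : PDO hd} (h : coeff hd x = coeff hd y) : x = y := Subtype.ext h

theorem coeff_ext {x y : PDO hd} (h : ∀ s, coeff hd x s = coeff hd y s) : x = y :=
  coeff_inj (funext h)

theorem exists_ord (x : PDO hd) : ∃ N, OrdLe (coeff hd x) N := x.2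

variable (hd)

/-- The operator with a given bounded coefficient function. -/
def ofCoeff (f : ℤ → A) (hf : ∃ N, OrdLe f N) : PDO hd := ⟨f, hf⟩

@[simp] theorem coeff_ofCoeff (f : ℤ → A) (hf : ∃ N, OrdLe f N) :
    coeff hd (ofCoeff hd f hf) = f := rfl

/-- The monomial `a D^i`. -/
def mon (i : ℤ) (a : A) : PDO hd :=
  ofCoeff hd (fun j => if j = i then a else 0) ⟨i, fun j hj => if_neg (by omega)⟩

theorem coeff_mon (i : ℤ) (a : A) (j : ℤ) : coeff hd (mon hd i a) j = if j = i then a else 0 :=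
  rfl

theorem mon_ord (i : ℤ) (a : A) : OrdLe (coeff hd (mon hd i a)) i :=
  fun _ hj => if_neg (by omega)

noncomputable instance : Mul (PDO hd) where
  mul x y := ofCoeff hd (mulM d (coeff hd x) (coeff hd y)) (by
    obtain ⟨N, hN⟩ := exists_ord x
    obtain ⟨M, hM⟩ := exists_ord y
    exact ⟨N + M, mulM_ordLe hd hN hM⟩)

noncomputable instance : One (PDO hd) where
  one := mon hd 0 1

theorem one_def : (1 : PDO hd) = mon hd 0 1 := rfl

theorem coeff_mul (x y : PDO hd) : coeff hd (x * y) = mulM d (coeff hd x) (coeff hd y) := rfl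

theorem left_distrib' (x y z : PDO hd) : x * (y + z) = x * y + x * z := by
  obtain ⟨N, hN⟩ := exists_ord x
  obtain ⟨M, hM⟩ := exists_ord y
  obtain ⟨K, hK⟩ := exists_ord z
  apply coeff_inj
  simp only [map_add, coeff_mul]
  exact mulM_add_right hd hN hM hK

theorem right_distrib' (x y z : PDO hd) : (x + y) * z = x * z + y * z := by
  obtain ⟨N, hN⟩ := exists_ord x
  obtain ⟨M, hM⟩ := exists_ord y
  obtain ⟨K, hK⟩ := exists_ord z
  apply coeff_inj
  simp only [map_add, coeff_mul]
  exact mulM_add_left hd hN hM hK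

noncomputable instance : NonUnitalNonAssocRing (PDO hd) where
  left_distrib := left_distrib' hd
  right_distrib := right_distrib' hd
  zero_mul x := by
    have h := right_distrib' hd 0 0 x
    rw [add_zero] at h
    exact left_eq_add.mp h
  mul_zero x := by
    have h := left_distrib' hd x 0 0
    rw [add_zero] at h
    exact left_eq_add.mp h

/-! ### Reduction of additive identities to monomials -/

variable {hd}

/-- An additive map of operators is *continuous* when it shifts the order filtration by a
bounded amount. -/
def Cont (T : PDO hd →+ PDO hd) : Prop :=
  ∃ K, ∀ x N, OrdLe (coeff hd x) N → OrdLe (coeff hd (T x)) (N + K)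

theorem Cont.comp {S T : PDO hd →+ PDO hd} (hS : Cont S) (hT : Cont T) : Cont (S.comp T) := by
  obtain ⟨K, hK⟩ := hS
  obtain ⟨L, hL⟩ := hT
  refine ⟨L + K, fun x N h => ?_⟩
  rw [← add_assoc]
  exact hK _ _ (hL _ _ h)

theorem Cont.add {S T : PDO hd →+ PDO hd} (hS : Cont S) (hT : Cont T) : Cont (S + T) := by
  obtain ⟨K, hK⟩ := hS
  obtain ⟨L, hL⟩ := hT
  refine ⟨max K L, fun x N h => ?_⟩
  rw [AddMonoidHom.add_apply, map_add]
  exact ((hK _ _ h).mono (by omega)).add ((hL _ _ h).mono (by omega))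

theorem Cont.neg {T : PDO hd →+ PDO hd} (hT : Cont T) : Cont (-T) := by
  obtain ⟨L, hL⟩ := hT
  refine ⟨L, fun x N h => ?_⟩
  rw [AddMonoidHom.neg_apply, map_neg]
  exact (hL _ _ h).neg

theorem cont_mulLeft (x : PDO hd) : Cont (AddMonoidHom.mulLeft x) := by
  obtain ⟨K, hK⟩ := exists_ord x
  refine ⟨K, fun y N h => ?_⟩
  rw [add_comm]
  exact mulM_ordLe hd hK h

theorem cont_mulRight (x : PDO hd) : Cont (AddMonoidHom.mulRight x) := by
  obtain ⟨K, hK⟩ := exists_ord x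
  exact ⟨K, fun y N h => mulM_ordLe hd h hK⟩

/-- A continuous additive map killing all monomials is zero: modulo operators of very low order,
every operator is a finite sum of monomials. -/
theorem eq_zero_of_mon {T : PDO hd →+ PDO hd} (hT : Cont T) (h : ∀ i a, T (mon hd i a) = 0)
    (x : PDO hd) : T x = 0 := by
  obtain ⟨K, hK⟩ := hT
  obtain ⟨N, hN⟩ := exists_ord x
  apply coeff_ext
  intro s
  set F : Finset ℤ := Finset.Icc (s - K) N
  have hlow : OrdLe (coeff hd (x - ∑ i ∈ F, mon hd i (coeff hd x i))) (s - K - 1) := by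
    intro j hj
    rw [map_sub, map_sum, Pi.sub_apply, Finset.sum_apply]
    simp only [coeff_mon, Finset.sum_ite_eq]
    split_ifs with hjF
    · exact sub_self _
    · rw [sub_zero]
      exact hN j (by simp only [F, Finset.mem_Icc] at hjF; omega)
  have h0 := hK _ _ hlow s (by omega)
  rw [map_sub, map_sum] at h0
  simpa [h] using h0

theorem eq_of_mon {S T : PDO hd →+ PDO hd} (hS : Cont S) (hT : Cont T)
    (h : ∀ i a, S (mon hd i a) = T (mon hd i a)) (x : PDO hd) : S x = T x := by
  have := eq_zero_of_mon (hS.add hT.neg) (fun i a => by simp [h]) x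
  simpa [← sub_eq_add_neg, sub_eq_zero] using this

/-! ### Products of monomials and associativity -/

theorem coeff_mon_mul_mon (i j : ℤ) (a b : A) (s : ℤ) :
    coeff hd (mon hd i a * mon hd j b) s =
      if s ≤ i + j then zchoose i (i + j - s).toNat • (a * d^[(i + j - s).toNat] b) else 0 := by
  rw [coeff_mul, mulM_eq, finsum_eq_single _ ((i, j) : ℤ × ℤ)]
  · simp [mulTerm, coeff_mon]
  · rintro ⟨i', j'⟩ hp
    apply mulTerm_eq_zero hd
    by_cases hi : i' = i
    · refine Or.inr (Or.inr (if_neg fun hj => hp ?_))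
      exact Prod.ext hi hj
    · exact Or.inr (Or.inl (if_neg hi))

theorem coeff_mon_mul_mon_nat (i j : ℤ) (a b : A) (n : ℕ) :
    coeff hd (mon hd i a * mon hd j b) (i + j - n) = zchoose i n • (a * d^[n] b) := by
  rw [coeff_mon_mul_mon, if_pos (by omega), show (i + j - (i + j - (n : ℤ))).toNat = n by omega]

theorem coeff_mon_mul_mon_of_lt {i j : ℤ} (a b : A) {s : ℤ} (h : i + j < s) :
    coeff hd (mon hd i a * mon hd j b) s = 0 := by
  rw [coeff_mon_mul_mon, if_neg (by omega)]

/-- To compare with a product of monomials it suffices to look at the coefficients from the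
leading one downwards. -/
theorem mon_mul_mon_eq {i j : ℤ} {a b : A} {x : PDO hd} (hx : OrdLe (coeff hd x) (i + j))
    (h : ∀ n : ℕ, zchoose i n • (a * d^[n] b) = coeff hd x (i + j - n)) :
    mon hd i a * mon hd j b = x := by
  apply coeff_ext
  intro s
  by_cases hs : i + j < s
  · rw [coeff_mon_mul_mon_of_lt _ _ hs, hx s hs]
  · obtain ⟨n, hn⟩ := Int.eq_ofNat_of_zero_le (show 0 ≤ i + j - s by omega)
    obtain rfl : s = i + j - n := by omega
    rw [coeff_mon_mul_mon_nat, h]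

theorem cst_mul_mon (i : ℤ) (a b : A) : mon hd 0 a * mon hd i b = mon hd i (a * b) := by
  refine mon_mul_mon_eq (by rw [zero_add]; exact mon_ord hd _ _) fun n => ?_
  rw [coeff_mon]
  cases n with
  | zero => simp
  | succ n => rw [zchoose_zero_succ, zero_smul, if_neg (by push_cast; omega)]

theorem mon_mul_D (i j : ℤ) (a : A) : mon hd i a * mon hd j 1 = mon hd (i + j) a := by
  refine mon_mul_mon_eq (mon_ord hd _ _) fun n => ?_
  rw [coeff_mon]
  cases n with
  | zero => simp
  | succ n => rw [iter_one hd, mul_zero, smul_zero, if_neg (by push_cast; omega)]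

theorem one_mul' (x : PDO hd) : 1 * x = x := by
  refine eq_of_mon (S := AddMonoidHom.mulLeft 1) (T := AddMonoidHom.id _) (cont_mulLeft 1)
    ⟨0, fun x N h => by simpa using h⟩ (fun i a => ?_) x
  simp [one_def, cst_mul_mon]

theorem mul_one' (x : PDO hd) : x * 1 = x := by
  refine eq_of_mon (S := AddMonoidHom.mulRight 1) (T := AddMonoidHom.id _) (cont_mulRight 1)
    ⟨0, fun x N h => by simpa using h⟩ (fun i a => ?_) x
  simp [one_def, mon_mul_D]

theorem mon_add (i : ℤ) (a b : A) : mon hd i (a + b) = mon hd i a + mon hd i b := by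
  apply coeff_ext
  intro s
  rw [map_add, Pi.add_apply]
  simp only [coeff_mon]
  split_ifs <;> simp

theorem mon_neg (i : ℤ) (a : A) : mon hd i (-a) = -mon hd i a := by
  apply coeff_ext
  intro s
  rw [map_neg, Pi.neg_apply]
  simp only [coeff_mon]
  split_ifs <;> simp

/-- `D ∘ b D^j = b D^{j+1} + b' D^j`. -/
theorem D_mul_mon (j : ℤ) (b : A) :
    mon hd 1 1 * mon hd j b = mon hd (j + 1) b + mon hd j (d b) := by
  refine mon_mul_mon_eq ?_ fun n => ?_
  · rw [map_add]
    exact ((mon_ord hd _ _).mono (by omega)).add ((mon_ord hd _ _).mono (by omega))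
  · rw [map_add, Pi.add_apply, coeff_mon, coeff_mon]
    match n with
    | 0 => rw [if_pos (by push_cast; omega), if_neg (by push_cast; omega)]; simp
    | 1 =>
      rw [if_neg (by push_cast; omega), if_pos (by push_cast; omega)]
      have := zchoose_succ_succ 0 0
      simp at this
      simp [this]
    | n + 2 =>
      rw [if_neg (by push_cast; omega), if_neg (by push_cast; omega)]
      have := zchoose_succ_succ 0 (n + 1)
      simp at this
      simp [this]

/-- `x ↦ x[1] + x'`, the shift of the coefficients by one plus their derivative: the left
multiplication by `D` written on coefficients. -/
noncomputable def shiftD : PDO hd →+ PDO hd :=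
  AddMonoidHom.mk' (fun x => ofCoeff hd (fun s => coeff hd x (s - 1) + d (coeff hd x s)) (by
    obtain ⟨N, hN⟩ := exists_ord x
    exact ⟨N + 1, fun i hi => by
      beta_reduce
      rw [hN _ (by omega), hN _ (by omega), d_zero hd, add_zero]⟩)) (fun x y => by
    apply coeff_ext
    intro s
    simp only [coeff_ofCoeff, map_add, Pi.add_apply, hd.1]
    abel)

theorem coeff_D_mul (x : PDO hd) (s : ℤ) :
    coeff hd (mon hd 1 1 * x) s = coeff hd x (s - 1) + d (coeff hd x s) := by
  have h : mon hd 1 1 * x = shiftD x := by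
    refine eq_of_mon (S := AddMonoidHom.mulLeft (mon hd 1 1)) (cont_mulLeft _)
      ⟨1, fun x N h i hi => ?_⟩ (fun i a => ?_) x
    · change coeff hd x (i - 1) + d (coeff hd x i) = 0
      rw [h _ (by omega), h _ (by omega), d_zero hd, add_zero]
    · rw [AddMonoidHom.coe_mulLeft, D_mul_mon]
      apply coeff_ext
      intro s
      change _ = coeff hd (mon hd i a) (s - 1) + d (coeff hd (mon hd i a) s)
      rw [map_add, Pi.add_apply]
      simp only [coeff_mon]
      congr 1
      · simp only [sub_eq_iff_eq_add]
      · split_ifs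
        · rfl
        · exact (d_zero hd).symm
  rw [h]
  rfl

/-- `(D x) y = D (x y)`: on monomials this is Pascal's rule for integer upper index. -/
theorem D_mul_assoc (x y : PDO hd) : mon hd 1 1 * x * y = mon hd 1 1 * (x * y) := by
  refine eq_of_mon (S := (AddMonoidHom.mulRight y).comp (AddMonoidHom.mulLeft (mon hd 1 1)))
    (T := (AddMonoidHom.mulLeft (mon hd 1 1)).comp (AddMonoidHom.mulRight y))
    ((cont_mulRight _).comp (cont_mulLeft _)) ((cont_mulLeft _).comp (cont_mulRight _))
    (fun i a => ?_) x
  refine eq_of_mon (S := AddMonoidHom.mulLeft (mon hd 1 1 * mon hd i a))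
    (T := (AddMonoidHom.mulLeft (mon hd 1 1)).comp (AddMonoidHom.mulLeft (mon hd i a)))
    (cont_mulLeft _) ((cont_mulLeft _).comp (cont_mulLeft _)) (fun j b => ?_) y
  simp only [AddMonoidHom.coe_mulLeft, AddMonoidHom.coe_comp, Function.comp_apply]
  apply coeff_ext
  intro s
  rw [coeff_D_mul, D_mul_mon, add_mul, map_add, Pi.add_apply]
  by_cases hs : i + j + 1 < s
  · rw [coeff_mon_mul_mon_of_lt _ _ (by omega), coeff_mon_mul_mon_of_lt _ _ (by omega),
      coeff_mon_mul_mon_of_lt _ _ (by omega), coeff_mon_mul_mon_of_lt _ _ (by omega), d_zero hd]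
  · obtain ⟨n, hn⟩ := Int.eq_ofNat_of_zero_le (show 0 ≤ i + j + 1 - s by omega)
    cases n with
    | zero =>
      obtain rfl : s = i + j + 1 := by push_cast at hn; omega
      rw [coeff_mon_mul_mon_of_lt (i := i) (j := j) _ _ (by omega),
        coeff_mon_mul_mon_of_lt (i := i) (j := j) (s := i + j + 1) _ _ (by omega), d_zero hd]
      simp [coeff_mon_mul_mon, show i + 1 + j = i + j + 1 by ring]
    | succ n =>
      obtain rfl : s = i + j - n := by push_cast at hn; omega
      have h1 : i + j - (n : ℤ) = i + 1 + j - ((n + 1 : ℕ) : ℤ) := by push_cast; ring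
      have h2 : i + j - (n : ℤ) - 1 = i + j - ((n + 1 : ℕ) : ℤ) := by push_cast; ring
      rw [h2, coeff_mon_mul_mon_nat, coeff_mon_mul_mon_nat, coeff_mon_mul_mon_nat, h1,
        coeff_mon_mul_mon_nat, d_zsmul hd, hd.2, zchoose_succ_succ, add_smul, smul_add,
        Function.iterate_succ_apply']
      abel

theorem D_mul_injective : Function.Injective (fun x : PDO hd => mon hd 1 1 * x) := by
  have key : ∀ x : PDO hd, mon hd 1 1 * x = 0 → x = 0 := by
    intro x hx
    obtain ⟨N, hN⟩ := exists_ord x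
    have h : ∀ k : ℕ, OrdLe (coeff hd x) (N - k) := by
      intro k
      induction k with
      | zero => simpa using hN
      | succ k ih =>
        intro i hi
        have h0 := coeff_D_mul x (i + 1)
        rw [hx, ih (i + 1) (by push_cast at hi; omega), d_zero hd] at h0
        simpa using h0.symm
    exact coeff_ext fun s => h (N + 1 - s).toNat s (by omega)
  intro x y h
  have := key (x - y) (by rw [mul_sub]; exact sub_eq_zero.mpr h)
  exact sub_eq_zero.mp this

theorem Dpow_mul_assoc (i : ℤ) (x y : PDO hd) :
    mon hd i 1 * x * y = mon hd i 1 * (x * y) := by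
  have hDD : ∀ (i : ℤ) (x : PDO hd), mon hd 1 1 * (mon hd i 1 * x) = mon hd (1 + i) 1 * x := by
    intro i x
    rw [← D_mul_assoc, mon_mul_D]
  induction i using Int.induction_on with
  | zero => rw [← one_def, one_mul', one_mul']
  | succ i ih => rw [add_comm, ← hDD, ← hDD, D_mul_assoc, ih]
  | pred i ih =>
    apply D_mul_injective
    change mon hd 1 1 * (mon hd (-(i : ℤ) - 1) 1 * x * y) =
      mon hd 1 1 * (mon hd (-(i : ℤ) - 1) 1 * (x * y))
    rw [← D_mul_assoc, hDD, hDD, show (1 : ℤ) + (-(i : ℤ) - 1) = -i by ring, ih]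

theorem coeff_cst_mul (a : A) (x : PDO hd) (s : ℤ) :
    coeff hd (mon hd 0 a * x) s = a * coeff hd x s := by
  rw [coeff_mul, mulM_eq, finsum_eq_single _ ((0, s) : ℤ × ℤ)]
  · simp [mulTerm, coeff_mon]
  · rintro ⟨i, j⟩ hp
    by_cases hi : i = 0
    · subst hi
      unfold mulTerm
      split_ifs with h
      · simp only [zero_add] at h ⊢
        obtain ⟨n, hn⟩ : ∃ n, (j - s).toNat = n + 1 :=
          Nat.exists_eq_succ_of_ne_zero fun h0 => hp (Prod.ext rfl (by simp; omega))
        rw [hn, zchoose_zero_succ, zero_smul]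
      · rfl
    · exact mulTerm_eq_zero hd (Or.inr (Or.inl (if_neg hi)))

theorem cst_mul_assoc (a : A) (x y : PDO hd) : mon hd 0 a * x * y = mon hd 0 a * (x * y) := by
  refine eq_of_mon (S := (AddMonoidHom.mulRight y).comp (AddMonoidHom.mulLeft (mon hd 0 a)))
    (T := (AddMonoidHom.mulLeft (mon hd 0 a)).comp (AddMonoidHom.mulRight y))
    ((cont_mulRight _).comp (cont_mulLeft _)) ((cont_mulLeft _).comp (cont_mulRight _))
    (fun i b => ?_) x
  refine eq_of_mon (S := AddMonoidHom.mulLeft (mon hd 0 a * mon hd i b))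
    (T := (AddMonoidHom.mulLeft (mon hd 0 a)).comp (AddMonoidHom.mulLeft (mon hd i b)))
    (cont_mulLeft _) ((cont_mulLeft _).comp (cont_mulLeft _)) (fun j c => ?_) y
  simp only [AddMonoidHom.coe_mulLeft, AddMonoidHom.coe_comp, Function.comp_apply]
  apply coeff_ext
  intro s
  rw [coeff_cst_mul, cst_mul_mon, coeff_mon_mul_mon, coeff_mon_mul_mon]
  split_ifs
  · rw [mul_smul_comm, mul_assoc]
  · simp

theorem mul_assoc' (x y z : PDO hd) : x * y * z = x * (y * z) := by
  refine eq_of_mon (S := (AddMonoidHom.mulRight z).comp (AddMonoidHom.mulRight y))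
    (T := AddMonoidHom.mulRight (y * z))
    ((cont_mulRight _).comp (cont_mulRight _)) (cont_mulRight _) (fun i a => ?_) x
  simp only [AddMonoidHom.coe_mulRight, AddMonoidHom.coe_comp, Function.comp_apply]
  have h : mon hd i a = mon hd 0 a * mon hd i 1 := by rw [cst_mul_mon, mul_one]
  rw [h, cst_mul_assoc, cst_mul_assoc, cst_mul_assoc, Dpow_mul_assoc]

noncomputable instance : Ring (PDO hd) :=
  { (inferInstance : AddCommGroup (PDO hd)), (inferInstance : NonUnitalNonAssocRing (PDO hd)) with
    one := 1
    one_mul := one_mul'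
    mul_one := mul_one'
    mul_assoc := mul_assoc' }

/-! ### The formal adjoint -/

/-- The sign `(-1)^i` as an integer. -/
def sgn (i : ℤ) : ℤ := if Even i then 1 else -1

theorem sgn_zero : sgn 0 = 1 := rfl

theorem sgn_add_one (i : ℤ) : sgn (i + 1) = -sgn i := by
  unfold sgn
  by_cases h : Even i <;> simp [h]

theorem sgn_sub_one (i : ℤ) : sgn (i - 1) = -sgn i := by
  have := sgn_add_one (i - 1)
  rw [sub_add_cancel] at this
  omega

/-- The summand of index `r` in the `s`-th coefficient of the adjoint. -/
noncomputable def adjTerm (d : A → A) (f : ℤ → A) (s : ℤ) (r : ℕ) : A :=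
  (if Even (s + (r : ℤ)) then zchoose (s + (r : ℤ)) r else -zchoose (s + (r : ℤ)) r) •
    d^[r] (f (s + (r : ℤ)))

theorem adjM_eq (f : ℤ → A) (s : ℤ) : adjM d f s = ∑ᶠ r, adjTerm d f s r := rfl

theorem adjTerm_eq_zero (hd : IsDeriv d) {f : ℤ → A} {s : ℤ} {r : ℕ} (h : f (s + r) = 0) :
    adjTerm d f s r = 0 := by
  rw [adjTerm, h, iter_zero hd, smul_zero]

theorem adjTerm_finite (hd : IsDeriv d) {f : ℤ → A} {N : ℤ} (hf : OrdLe f N) (s : ℤ) :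
    (Function.support (adjTerm d f s)).Finite := by
  refine (Set.finite_Iic (N - s).toNat).subset fun r hr => ?_
  have : ¬ N < s + r := fun h => hr (adjTerm_eq_zero hd (hf _ h))
  simp only [Set.mem_Iic]
  omega

theorem adjM_ordLe (hd : IsDeriv d) {f : ℤ → A} {N : ℤ} (hf : OrdLe f N) :
    OrdLe (adjM d f) N := fun s hs => by
  rw [adjM_eq]
  exact finsum_eq_zero_of_forall_eq_zero fun r => adjTerm_eq_zero hd (hf _ (by omega))

theorem adjM_add (hd : IsDeriv d) {f g : ℤ → A} {N M : ℤ} (hf : OrdLe f N) (hg : OrdLe g M) :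
    adjM d (f + g) = adjM d f + adjM d g := by
  funext s
  rw [Pi.add_apply, adjM_eq, adjM_eq, adjM_eq,
    ← finsum_add_distrib (adjTerm_finite hd hf s) (adjTerm_finite hd hg s)]
  refine finsum_congr fun r => ?_
  simp only [adjTerm, Pi.add_apply, iter_add hd, smul_add]

/-- The formal adjoint on operators. -/
noncomputable def adj : PDO hd →+ PDO hd :=
  AddMonoidHom.mk' (fun x => ofCoeff hd (adjM d (coeff hd x)) (by
    obtain ⟨N, hN⟩ := exists_ord x
    exact ⟨N, adjM_ordLe hd hN⟩)) (fun x y => by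
    obtain ⟨N, hN⟩ := exists_ord x
    obtain ⟨M, hM⟩ := exists_ord y
    apply coeff_inj
    simp only [coeff_ofCoeff, map_add]
    exact adjM_add hd hN hM)

theorem coeff_adj (x : PDO hd) : coeff hd (adj x) = adjM d (coeff hd x) := rfl

theorem cont_adj : Cont (adj : PDO hd →+ PDO hd) :=
  ⟨0, fun x N h => by rw [add_zero]; exact adjM_ordLe hd h⟩

theorem adj_mon (i : ℤ) (a : A) : adj (mon hd i a) = sgn i • (mon hd i 1 * mon hd 0 a) := by
  apply coeff_ext
  intro s
  rw [map_zsmul, Pi.smul_apply, coeff_mon_mul_mon, coeff_adj, adjM_eq, add_zero]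
  split_ifs with hs
  · have hr : s + ((i - s).toNat : ℤ) = i := by omega
    rw [finsum_eq_single _ (i - s).toNat]
    · rw [adjTerm, hr, coeff_mon, if_pos rfl, one_mul, smul_smul, sgn]
      split_ifs <;> simp
    · intro r hr'
      exact adjTerm_eq_zero hd (if_neg (by omega))
  · rw [smul_zero]
    exact finsum_eq_zero_of_forall_eq_zero fun r => adjTerm_eq_zero hd (if_neg (by omega))

theorem adj_D_mul (x : PDO hd) : adj (mon hd 1 1 * x) = -(adj x * mon hd 1 1) := by
  refine eq_of_mon (S := adj.comp (AddMonoidHom.mulLeft (mon hd 1 1)))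
    (T := -((AddMonoidHom.mulRight (mon hd 1 1)).comp adj))
    (cont_adj.comp (cont_mulLeft _)) ((cont_mulRight _).comp cont_adj).neg (fun k c => ?_) x
  simp only [AddMonoidHom.coe_mulRight, AddMonoidHom.coe_mulLeft, AddMonoidHom.coe_comp,
    Function.comp_apply, AddMonoidHom.neg_apply]
  have h0 : mon hd 1 1 * mon hd 0 c = mon hd 1 c + mon hd 0 (d c) := D_mul_mon 0 c
  have h1 : mon hd 0 c * mon hd 1 1 = mon hd 1 c := mon_mul_D 0 1 c
  rw [D_mul_mon, map_add, adj_mon, adj_mon, adj_mon, sgn_add_one, ← mon_mul_D, mul_assoc, h0,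
    smul_mul_assoc, mul_assoc, h1, mul_add]
  simp only [neg_smul, smul_add]
  abel

theorem Dpow_mul_Dpow (i j : ℤ) : mon hd i 1 * mon hd j 1 = mon hd (i + j) 1 := mon_mul_D i j 1

theorem D_mul_Dinv : mon hd 1 1 * mon hd (-1) 1 = 1 := Dpow_mul_Dpow 1 (-1)

theorem Dinv_mul_D : mon hd (-1) 1 * mon hd 1 1 = 1 := Dpow_mul_Dpow (-1) 1

theorem adj_Dinv_mul (x : PDO hd) : adj (mon hd (-1) 1 * x) = -(adj x * mon hd (-1) 1) := by
  have h := adj_D_mul (mon hd (-1) 1 * x)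
  rw [← mul_assoc, D_mul_Dinv, one_mul] at h
  rw [h, neg_mul, neg_neg, mul_assoc, D_mul_Dinv, mul_one]

theorem adj_Dpow_mul (i : ℤ) (x : PDO hd) :
    adj (mon hd i 1 * x) = sgn i • (adj x * mon hd i 1) := by
  induction i using Int.induction_on with
  | zero => rw [← one_def, one_mul, mul_one, sgn_zero, one_smul]
  | succ i ih =>
    have h : mon hd ((i : ℤ) + 1) 1 = mon hd 1 1 * mon hd (i : ℤ) 1 := by
      rw [Dpow_mul_Dpow, add_comm]
    rw [h, mul_assoc, adj_D_mul, ih, sgn_add_one, smul_mul_assoc, mul_assoc, ← h,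
      Dpow_mul_Dpow, neg_smul]
  | pred i ih =>
    have h : mon hd (-(i : ℤ) - 1) 1 = mon hd (-1) 1 * mon hd (-(i : ℤ)) 1 := by
      rw [Dpow_mul_Dpow]; congr 1; ring
    have h' : mon hd (-(i : ℤ) - 1) 1 = mon hd (-(i : ℤ)) 1 * mon hd (-1) 1 := by
      rw [Dpow_mul_Dpow]; congr 1
    rw [h, mul_assoc, adj_Dinv_mul, ih, sgn_sub_one, smul_mul_assoc, mul_assoc, ← h', ← h,
      neg_smul]

theorem adj_cst_mul (a : A) (x : PDO hd) : adj (mon hd 0 a * x) = adj x * mon hd 0 a := by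
  refine eq_of_mon (S := adj.comp (AddMonoidHom.mulLeft (mon hd 0 a)))
    (T := (AddMonoidHom.mulRight (mon hd 0 a)).comp adj)
    (cont_adj.comp (cont_mulLeft _)) ((cont_mulRight _).comp cont_adj) (fun k c => ?_) x
  simp only [AddMonoidHom.coe_mulRight, AddMonoidHom.coe_mulLeft, AddMonoidHom.coe_comp,
    Function.comp_apply]
  rw [cst_mul_mon, adj_mon, adj_mon, smul_mul_assoc, mul_assoc, cst_mul_mon, mul_comm a c]

theorem mon_eq (i : ℤ) (a : A) : mon hd i a = mon hd 0 a * mon hd i 1 := by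
  rw [cst_mul_mon, mul_one]

theorem adj_Dpow (i : ℤ) : adj (mon hd i 1) = sgn i • mon hd i 1 := by
  rw [adj_mon, ← one_def, mul_one]

theorem adj_cst (a : A) : adj (mon hd 0 a) = mon hd 0 a := by
  rw [adj_mon, ← one_def, one_mul, sgn_zero, one_smul]

/-- The adjoint is an anti-homomorphism. -/
theorem adj_mul (x y : PDO hd) : adj (x * y) = adj y * adj x := by
  refine eq_of_mon (S := adj.comp (AddMonoidHom.mulRight y))
    (T := (AddMonoidHom.mulLeft (adj y)).comp adj)
    (cont_adj.comp (cont_mulRight _)) ((cont_mulLeft _).comp cont_adj) (fun k c => ?_) x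
  simp only [AddMonoidHom.coe_mulRight, AddMonoidHom.coe_mulLeft, AddMonoidHom.coe_comp,
    Function.comp_apply]
  rw [adj_mon, mon_eq, mul_assoc, adj_cst_mul, adj_Dpow_mul, smul_mul_assoc, mul_smul_comm,
    mul_assoc]

theorem adj_one : adj (1 : PDO hd) = 1 := adj_cst 1

theorem adj_pow (x : PDO hd) (m : ℕ) : adj (x ^ m) = adj x ^ m := by
  induction m with
  | zero => rw [pow_zero, pow_zero, adj_one]
  | succ m ih => rw [pow_succ, adj_mul, ih, pow_succ']

/-! ### Orders and leading coefficients of powers -/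

theorem mul_ord {x y : PDO hd} {N M : ℤ} (hx : OrdLe (coeff hd x) N) (hy : OrdLe (coeff hd y) M) :
    OrdLe (coeff hd (x * y)) (N + M) := mulM_ordLe hd hx hy

theorem mul_top {x y : PDO hd} {N M : ℤ} (hx : OrdLe (coeff hd x) N)
    (hy : OrdLe (coeff hd y) M) :
    coeff hd (x * y) (N + M) = coeff hd x N * coeff hd y M := mulM_top hd hx hy

/-- `x` is monic of order one. -/
def Monic1 (x : PDO hd) : Prop := OrdLe (coeff hd x) 1 ∧ coeff hd x 1 = 1

theorem Monic1.pow {x : PDO hd} (hx : Monic1 x) (m : ℕ) :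
    OrdLe (coeff hd (x ^ m)) m ∧ coeff hd (x ^ m) m = 1 := by
  induction m with
  | zero => exact ⟨mon_ord hd 0 1, by simp [one_def, coeff_mon]⟩
  | succ m ih =>
    rw [pow_succ]
    push_cast
    exact ⟨mul_ord ih.1 hx.1, by rw [mul_top ih.1 hx.1, ih.2, hx.2, one_mul]⟩

/-- Changing a monic operator `x` of order one by `e D^j + ⋯` changes `x ^ m` by
`m e D^{j+m-1} + ⋯`. -/
theorem pow_sub_pow {x y : PDO hd} (hx : Monic1 x) (hy : Monic1 y) {j : ℤ}
    (hj : OrdLe (coeff hd (y - x)) j) (m : ℕ) :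
    OrdLe (coeff hd (y ^ m - x ^ m)) (j + m - 1) ∧
      coeff hd (y ^ m - x ^ m) (j + m - 1) = m • coeff hd (y - x) j := by
  induction m with
  | zero =>
    rw [pow_zero, pow_zero, sub_self, map_zero]
    exact ⟨fun _ _ => rfl, by simp⟩
  | succ m ih =>
    have h : y ^ (m + 1) - x ^ (m + 1) = y * (y ^ m - x ^ m) + (y - x) * x ^ m := by
      rw [pow_succ', pow_succ', mul_sub, sub_mul]; abel
    have e1 : j + ((m + 1 : ℕ) : ℤ) - 1 = 1 + (j + m - 1) := by push_cast; ring
    have e2 : 1 + (j + m - 1) = j + (m : ℤ) := by ring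
    have hp := hx.pow m
    rw [h, map_add, e1]
    refine ⟨(mul_ord hy.1 ih.1).add (by rw [e2]; exact mul_ord hj hp.1), ?_⟩
    rw [Pi.add_apply, mul_top hy.1 ih.1, e2, mul_top hj hp.1, hy.2, ih.2, hp.2, one_mul, mul_one,
      add_smul, one_smul]

theorem coeff_pow (x : PDO hd) (m : ℕ) : coeff hd (x ^ m) = powM d (coeff hd x) m := by
  induction m with
  | zero => rfl
  | succ m ih => rw [pow_succ', coeff_mul, ih, powM]

theorem eq_zero_of_ord {x : PDO hd} {N : ℤ} (h : ∀ k : ℕ, OrdLe (coeff hd x) (N - k)) : x = 0 :=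
  coeff_ext fun s => h (N + 1 - s).toNat s (by omega)

/-! ### The `m`-th root -/

section Root

variable [Algebra ℚ A]

/-- Monic `m`-th roots of order one, with prescribed coefficient of `D^0`, are unique. -/
theorem root_unique {m : ℕ} (hm : m ≠ 0) {x y : PDO hd} (hx : Monic1 x) (hy : Monic1 y)
    (h0 : coeff hd x 0 = coeff hd y 0) (h : x ^ m = y ^ m) : x = y := by
  symm
  rw [← sub_eq_zero]
  refine eq_zero_of_ord (N := -1) fun k => ?_
  induction k with
  | zero =>
    intro i hi
    rw [map_sub, Pi.sub_apply]
    rcases lt_trichotomy i 1 with h1 | rfl | h1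
    · obtain rfl : i = 0 := by push_cast at hi; omega
      rw [h0, sub_self]
    · rw [hx.2, hy.2, sub_self]
    · rw [hx.1 _ h1, hy.1 _ h1, sub_self]
  | succ k ih =>
    intro i hi
    by_cases hi' : -1 - (k : ℤ) < i
    · exact ih i hi'
    · obtain rfl : i = -1 - (k : ℤ) := by push_cast at hi; omega
      have := (pow_sub_pow hx hy ih m).2
      rw [h, sub_self, map_zero, Pi.zero_apply] at this
      rw [← Nat.cast_smul_eq_nsmul ℚ] at this
      exact (smul_eq_zero_iff_right (by exact_mod_cast hm)).mp this.symm

/-- Successive approximations of the `m`-th root of `L`, starting from `D`: the `k`-th step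
corrects the coefficient of `D^{-1-k}`. -/
noncomputable def approx (m : ℕ) (L : PDO hd) : ℕ → PDO hd
  | 0 => mon hd 1 1
  | k + 1 => approx m L k + mon hd (-1 - k)
      ((m : ℚ)⁻¹ • coeff hd (L - approx m L k ^ m) (m - 2 - k))

theorem approx_sub (m : ℕ) (L : PDO hd) (k : ℕ) :
    approx m L (k + 1) - approx m L k = mon hd (-1 - k)
      ((m : ℚ)⁻¹ • coeff hd (L - approx m L k ^ m) (m - 2 - k)) := by
  rw [approx, add_sub_cancel_left]

theorem approx_stable (m : ℕ) (L : PDO hd) (k l : ℕ) (hkl : k ≤ l) :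
    OrdLe (coeff hd (approx m L l - approx m L k)) (-1 - k) := by
  induction l, hkl using Nat.le_induction with
  | base => rw [sub_self, map_zero]; exact fun _ _ => rfl
  | succ l hl ih =>
    rw [← sub_add_sub_cancel _ (approx m L l), map_add, approx_sub]
    exact ((mon_ord hd _ _).mono (by omega)).add ih

theorem approx_monic (m : ℕ) (L : PDO hd) (k : ℕ) : Monic1 (approx m L k) := by
  have h := approx_stable m L 0 k k.zero_le
  have hD : approx m L k = (approx m L k - approx m L 0) + mon hd 1 1 := by
    rw [approx, sub_add_cancel]
  rw [hD]
  refine ⟨?_, ?_⟩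
  · rw [map_add]
    exact (h.mono (by simp)).add (mon_ord hd _ _)
  · rw [map_add, Pi.add_apply, h 1 (by simp), zero_add, coeff_mon, if_pos rfl]

theorem approx_pow {m : ℕ} (hm : m ≠ 0) {L : PDO hd}
    (hL : OrdLe (coeff hd (L - mon hd 1 1 ^ m)) (m - 2)) (k : ℕ) :
    OrdLe (coeff hd (L - approx m L k ^ m)) (m - 2 - k) := by
  induction k with
  | zero => simpa [approx] using hL
  | succ k ih =>
    have hs : OrdLe (coeff hd (approx m L (k + 1) - approx m L k)) (-1 - k) :=
      approx_stable m L k (k + 1) (Nat.le_succ k)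
    obtain ⟨h1, h2⟩ := pow_sub_pow (approx_monic m L k) (approx_monic m L (k + 1)) hs m
    rw [show (-1 - k + m - 1 : ℤ) = m - 2 - k by ring] at h1 h2
    rw [← sub_sub_sub_cancel_right _ _ (approx m L k ^ m), map_sub]
    intro i hi
    by_cases hi' : (m : ℤ) - 2 - k < i
    · exact (ih.sub h1) i hi'
    · obtain rfl : i = m - 2 - k := by push_cast at hi; omega
      rw [Pi.sub_apply, h2, approx_sub, coeff_mon, if_pos rfl, ← Nat.cast_smul_eq_nsmul ℚ,
        smul_smul, mul_inv_cancel₀ (by exact_mod_cast hm), one_smul, sub_self]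

/-- An operator `L = D^m + O(D^{m-2})` has an `m`-th root `D + O(D^{-1})`: the limit of the
approximations, whose coefficients are eventually constant. -/
theorem root_exists {m : ℕ} (hm : m ≠ 0) {L : PDO hd}
    (hL : OrdLe (coeff hd (L - mon hd 1 1 ^ m)) (m - 2)) :
    ∃ x : PDO hd, Monic1 x ∧ coeff hd x 0 = 0 ∧ x ^ m = L := by
  have hstab : ∀ (k : ℕ) (i : ℤ), -1 - (k : ℤ) < i →
      coeff hd (approx m L (-i).toNat) i = coeff hd (approx m L k) i := by
    intro k i hi
    rcases le_total k (-i).toNat with h | h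
    · have := approx_stable m L k _ h i hi
      rwa [map_sub, Pi.sub_apply, sub_eq_zero] at this
    · have := approx_stable m L _ k h i (by omega)
      rw [map_sub, Pi.sub_apply, sub_eq_zero] at this
      exact this.symm
  have hord : OrdLe (fun i => coeff hd (approx m L (-i).toNat) i) 1 := by
    intro i hi
    beta_reduce
    exact (approx_monic m L _).1 i hi
  refine ⟨ofCoeff hd (fun i => coeff hd (approx m L (-i).toNat) i) ⟨1, hord⟩, ?_⟩
  set x := ofCoeff hd (fun i => coeff hd (approx m L (-i).toNat) i) ⟨1, hord⟩
  have hx : Monic1 x := ⟨hord, by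
    simp only [x, coeff_ofCoeff]
    exact (approx_monic m L _).2⟩
  refine ⟨hx, ?_, ?_⟩
  · change coeff hd (mon hd 1 1) 0 = 0
    simp [coeff_mon]
  · symm
    rw [← sub_eq_zero]
    refine eq_zero_of_ord (N := m - 2) fun k => ?_
    have hxk : OrdLe (coeff hd (x - approx m L k)) (-1 - k) := by
      intro i hi
      rw [map_sub, Pi.sub_apply, sub_eq_zero]
      exact hstab k i hi
    have h1 := (pow_sub_pow (approx_monic m L k) hx hxk m).1
    rw [show (-1 - k + m - 1 : ℤ) = m - 2 - k by ring] at h1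
    rw [← sub_sub_sub_cancel_right _ _ (approx m L k ^ m), map_sub]
    exact (approx_pow hm hL k).sub h1

end Root

theorem D_pow (m : ℕ) : mon hd 1 1 ^ m = mon hd m 1 := by
  induction m with
  | zero => rfl
  | succ m ih => rw [pow_succ, ih, Dpow_mul_Dpow]; push_cast; rfl

/-- If `L` satisfies `L* = D L D⁻¹` and `x = D + O(D⁻¹)` is an `m`-th root of `L`, then
`x* = -D x D⁻¹` for even `m`: the operator `-D⁻¹ x* D` is another such root. -/
theorem adj_root [Algebra ℚ A] {m : ℕ} (hm : m ≠ 0) (hme : Even m) {L x : PDO hd} (hx : Monic1 x)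
    (hx0 : coeff hd x 0 = 0) (hxL : x ^ m = L)
    (hL : adj L = mon hd 1 1 * L * mon hd (-1) 1) :
    adj x = -(mon hd 1 1 * (x * mon hd (-1) 1)) := by
  have hlow : OrdLe (coeff hd (x - mon hd 1 1)) (-1) := by
    intro i hi
    rw [map_sub, Pi.sub_apply, coeff_mon]
    rcases lt_trichotomy i 1 with h1 | rfl | h1
    · obtain rfl : i = 0 := by omega
      rw [hx0, if_neg (by omega), sub_self]
    · rw [hx.2, if_pos rfl, sub_self]
    · rw [hx.1 _ h1, if_neg (by omega), sub_self]
  set w := x - mon hd 1 1 with hw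
  have hxw : x = mon hd 1 1 + w := by rw [hw]; abel
  set y := -(mon hd (-1) 1 * adj x * mon hd 1 1) with hy
  have hyw : y = mon hd 1 1 - mon hd (-1) 1 * adj w * mon hd 1 1 := by
    have : sgn 1 = -1 := rfl
    rw [hy, hxw, map_add, adj_Dpow, this, neg_smul, one_smul, mul_add, mul_neg, Dinv_mul_D, add_mul,
      neg_mul, one_mul]
    abel
  have hylow : OrdLe (coeff hd (mon hd (-1) 1 * adj w * mon hd 1 1)) (-1) := by
    have := mul_ord (mul_ord (y := adj w) (mon_ord hd (-1) 1) (adjM_ordLe hd hlow))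
      (mon_ord hd 1 1)
    simpa using this
  have hym : Monic1 y := by
    rw [hyw, Monic1, map_sub]
    refine ⟨(mon_ord hd 1 1).sub (hylow.mono (by omega)), ?_⟩
    rw [Pi.sub_apply, hylow 1 (by omega), coeff_mon, if_pos rfl, sub_zero]
  have hy0 : coeff hd y 0 = 0 := by
    rw [hyw, map_sub, Pi.sub_apply, hylow 0 (by omega), coeff_mon, if_neg (by omega), sub_zero]
  have hconj : ∀ k : ℕ, (mon hd (-1) 1 * adj x * mon hd 1 1) ^ k =
      mon hd (-1) 1 * adj x ^ k * mon hd 1 1 := by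
    intro k
    induction k with
    | zero => rw [pow_zero, pow_zero, mul_one, Dinv_mul_D]
    | succ k ih =>
      rw [pow_succ, ih, pow_succ]
      calc _ = mon hd (-1) 1 * adj x ^ k * (mon hd 1 1 * mon hd (-1) 1) * adj x * mon hd 1 1 := by
            simp only [mul_assoc]
        _ = _ := by rw [D_mul_Dinv, mul_one, mul_assoc (mon hd (-1) 1)]
  have hyL : y ^ m = L := by
    rw [hy, hme.neg_pow, hconj, ← adj_pow, hxL, hL]
    calc _ = (mon hd (-1) 1 * mon hd 1 1) * L * (mon hd (-1) 1 * mon hd 1 1) := by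
          simp only [mul_assoc]
      _ = L := by rw [Dinv_mul_D, one_mul, mul_one]
  have hxy : x = y := root_unique hm hx hym (hx0.trans hy0.symm) (hxL.trans hyL.symm)
  calc adj x = (mon hd 1 1 * mon hd (-1) 1) * adj x * (mon hd 1 1 * mon hd (-1) 1) := by
        rw [D_mul_Dinv, one_mul, mul_one]
    _ = -(mon hd 1 1 * (y * mon hd (-1) 1)) := by
        rw [hy]; simp only [mul_assoc, neg_mul, mul_neg, neg_neg]
    _ = _ := by rw [← hxy]

/-! ### The Drinfeld–Sokolov operator -/

variable (hd) in
/-- `D L` for the Drinfeld–Sokolov operator `L`. -/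
noncomputable def SOp (n : ℕ) (u : Fin (n - 1) → A) (ρ : A) : PDO hd :=
  mon hd (2 * (n : ℤ) - 1) 1
    + (∑ i : Fin (n - 1), (mon hd 0 (u i) * mon hd (2 * ((i : ℕ) : ℤ) + 1) 1
        + mon hd (2 * ((i : ℕ) : ℤ) + 1) 1 * mon hd 0 (u i)))
    + mon hd 0 ρ * (mon hd (-1) 1 * mon hd 0 ρ)

variable (hd) in
theorem coeff_LOp (n : ℕ) (u : Fin (n - 1) → A) (ρ : A) :
    coeff hd (mon hd (-1) 1 * SOp hd n u ρ) = LM d n u ρ := by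
  funext s
  rw [SOp, mul_add, mul_add, Dpow_mul_Dpow, Finset.mul_sum, map_add, map_add, map_sum,
    Pi.add_apply, Pi.add_apply, Finset.sum_apply,
    show (-1 + (2 * (n : ℤ) - 1)) = 2 * (n : ℤ) - 2 by ring]
  rfl

theorem sgn_of_odd {i : ℤ} (h : Odd i) : sgn i = -1 := if_neg (Int.not_even_iff_odd.mpr h)

variable (hd) in
/-- `D L` is skew-adjoint. -/
theorem adj_SOp (n : ℕ) (u : Fin (n - 1) → A) (ρ : A) :
    adj (SOp hd n u ρ) = -SOp hd n u ρ := by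
  rw [SOp, map_add, map_add, map_sum, adj_Dpow, sgn_of_odd ⟨n - 1, by ring⟩, neg_add, neg_add,
    ← Finset.sum_neg_distrib]
  congr 1
  · congr 1
    · simp
    · refine Finset.sum_congr rfl fun i _ => ?_
      rw [map_add, adj_mul, adj_mul, adj_Dpow, adj_cst, sgn_of_odd ⟨_, rfl⟩]
      simp
  · rw [adj_mul, adj_mul, adj_Dpow, adj_cst, sgn_of_odd (by decide)]
    simp [mul_assoc]

variable (hd) in
theorem LOp_ord {n : ℕ} (hn : 3 ≤ n) (u : Fin (n - 1) → A) (ρ : A) :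
    OrdLe (coeff hd (mon hd (-1) 1 * SOp hd n u ρ - mon hd (2 * (n : ℤ) - 2) 1))
      (2 * (n : ℤ) - 4) := by
  have h : mon hd (-1) 1 * SOp hd n u ρ - mon hd (2 * (n : ℤ) - 2) 1 =
      mon hd (-1) 1 * ((∑ i : Fin (n - 1), (mon hd 0 (u i) * mon hd (2 * ((i : ℕ) : ℤ) + 1) 1
        + mon hd (2 * ((i : ℕ) : ℤ) + 1) 1 * mon hd 0 (u i)))
      + mon hd 0 ρ * (mon hd (-1) 1 * mon hd 0 ρ)) := by
    rw [SOp, add_assoc, mul_add, Dpow_mul_Dpow,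
      show (-1 + (2 * (n : ℤ) - 1)) = 2 * (n : ℤ) - 2 by ring, add_sub_cancel_left]
  rw [h, show 2 * (n : ℤ) - 4 = -1 + (2 * n - 3) by ring]
  refine mul_ord (mon_ord hd _ _) ?_
  rw [map_add, map_sum]
  refine OrdLe.add ?_ ?_
  · intro s hs
    rw [Finset.sum_apply]
    refine Finset.sum_eq_zero fun i _ => ?_
    have hi : (i : ℕ) < n - 1 := i.2
    rw [map_add]
    exact ((mul_ord (mon_ord hd _ _) (mon_ord hd _ _)).mono (by omega)).add
      ((mul_ord (mon_ord hd _ _) (mon_ord hd _ _)).mono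
        (by omega : 2 * ((i : ℕ) : ℤ) + 1 + 0 ≤ 2 * n - 3)) s hs
  · exact (mul_ord (mon_ord hd _ _) (mul_ord (mon_ord hd _ _) (mon_ord hd _ _))).mono (by omega)

end Coefficients

end Psd

/-- for `L = D^{2n-2} + ∑_{i=1}^{n-1} D^{-1}(u^i D^{2i-1} + D^{2i-1}u^i)
+ D^{-1}ρD^{-1}ρ` over a differential `ℚ`-algebra, there exists a unique `P ∈ D⁻` of the
form `P = D + u₁D^{-1} + u₂D^{-2} + ⋯` with `P^{2n-2} = L`; moreover `[P, L] = 0` and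
`P* = -D P D^{-1}`. -/
theorem exists_unique_root_P {A : Type*} [CommRing A] [Algebra ℚ A] (d : A → A)
    (hd : IsDeriv d) (n : ℕ) (hn : 3 ≤ n) (u : Fin (n - 1) → A) (ρ : A) :
    ∃ P : ℤ → A,
      (P 1 = 1 ∧ P 0 = 0 ∧ (∀ i : ℤ, 1 < i → P i = 0)
        ∧ powM d P (2 * n - 2) = LM d n u ρ)
      ∧ mulM d P (LM d n u ρ) = mulM d (LM d n u ρ) P
      ∧ adjM d P = (fun s => -(mulM d (Dk 1) (mulM d P Dinv) s))
      ∧ ∀ P' : ℤ → A,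
          (P' 1 = 1 ∧ P' 0 = 0 ∧ (∀ i : ℤ, 1 < i → P' i = 0)
            ∧ powM d P' (2 * n - 2) = LM d n u ρ) → P' = P := by
  have hm : 2 * n - 2 ≠ 0 := by omega
  have hmc : ((2 * n - 2 : ℕ) : ℤ) = 2 * (n : ℤ) - 2 := by omega
  set L : Psd.PDO hd := Psd.mon hd (-1) 1 * Psd.SOp hd n u ρ with hLdef
  have hLM : LM d n u ρ = Psd.coeff hd L := (Psd.coeff_LOp hd n u ρ).symm
  have hlow : Psd.OrdLe (Psd.coeff hd (L - Psd.mon hd 1 1 ^ (2 * n - 2)))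
      ((2 * n - 2 : ℕ) - 2) := by
    rw [Psd.D_pow, hmc]
    exact (Psd.LOp_ord hd hn u ρ).mono (by omega)
  have hadj : Psd.adj L = Psd.mon hd 1 1 * L * Psd.mon hd (-1) 1 := by
    rw [hLdef, Psd.adj_Dinv_mul, Psd.adj_SOp, neg_mul, neg_neg, ← mul_assoc (Psd.mon hd 1 1),
      Psd.D_mul_Dinv, one_mul]
  obtain ⟨x, hx, hx0, hxL⟩ := Psd.root_exists hm hlow
  refine ⟨Psd.coeff hd x, ⟨hx.2, hx0, hx.1, ?_⟩, ?_, ?_, ?_⟩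
  · rw [← Psd.coeff_pow, hxL, hLM]
  · rw [hLM, ← Psd.coeff_mul, ← Psd.coeff_mul, ← hxL, ← pow_succ, ← pow_succ']
  · have h := Psd.adj_root hm ⟨n - 1, by omega⟩ hx hx0 hxL hadj
    have h' := congrArg (Psd.coeff hd) h
    rw [map_neg] at h'
    exact h'
  · rintro P' ⟨h1, h0, hP, hpow⟩
    set y : Psd.PDO hd := Psd.ofCoeff hd P' ⟨1, hP⟩ with hy
    have hyL : y ^ (2 * n - 2) = L := by
      apply Psd.coeff_inj
      rw [Psd.coeff_pow, ← hLM]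
      exact hpow
    have : y = x := Psd.root_unique hm ⟨hP, h1⟩ hx (h0.trans hx0.symm) (hyL.trans hxL.symm)
    rw [← this]
    rfl
end

section
/- Let P = D + u₁D^{-1} + u₂D^{-2} + ⋯ be a pseudo-differential operator of the first type. Then P* = −DPD^{-1} if and only if for every odd positive integer k the free term (the coefficient of D^0) of the differential operator part (P^k)₊ vanishes, i.e., (P^k)₊(1) = 0. -/
/-!
Put `T = P D^{-1}`. Since `P^* = -D T^*` and left multiplication by `D` is injective
(`D_injective`), the constraint `P^* = -D P D^{-1}` says exactly that `T^* = T`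
(`adj_condition_iff`). The free term of `P^k` is the residue (coefficient of `D^{-1}`) of
`P^k D^{-1} = T D T ⋯ D T` (`powM_eq_alt`), and for odd `k` the adjoint of this operator is the
same expression in `T^*` (`adjM_alt`). The residue changes sign under the adjoint
(`adjM_residue`).

If `T^* = T`, each of these residues is its own negative, hence zero. Conversely suppose the
residues vanish and let `v D^m` be the leading term of `V = T - T^*`. As `V^* = -V`, an even `m`
gives `2v = 0`. For odd `m = -k`, the operator `T D ⋯ D T - T^* D ⋯ D T^*` has leading term
`k v D^{-1}` (`alt_sub`), while its residue is zero; so `k v = 0` and `v = 0`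
(`selfadjoint_iff`).

This needs the ring structure and the adjoint on coefficient functions. Both sides of
associativity and of `(fg)^* = g^* f^*` are additive in `f` and see only finitely many
coefficients, so they may be checked for `f = a D^k` (`functional_eq_zero`); induction on `k`
in both directions then reduces them to `D (f g) = (D f) g` and `(D Y)^* = -Y^* D`, which are
Pascal's rule.
-/

open scoped BigOperators

/-! ### Generalized binomial coefficients and signs -/

theorem zchoose_eq_choose (i : ℤ) (r : ℕ) : zchoose i r = Ring.choose i r := by
  have h := Ring.descPochhammer_eq_factorial_smul_choose i r
  have h2 : ∏ k ∈ Finset.range r, (i - (k : ℤ)) = (r.factorial : ℤ) * Ring.choose i r := by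
    rw [← nsmul_eq_mul, ← h]
    rw [← Polynomial.eval_eq_smeval, descPochhammer_eval_eq_prod_range]
  rw [zchoose, h2]
  exact Int.mul_ediv_cancel_left _ (by exact_mod_cast r.factorial_ne_zero)

theorem zchoose_zero_right (i : ℤ) : zchoose i 0 = 1 := by simp [zchoose]

theorem zchoose_succ (i : ℤ) (r : ℕ) :
    zchoose (i + 1) (r + 1) = zchoose i r + zchoose i (r + 1) := by
  simp only [zchoose_eq_choose, Ring.choose_succ_succ]

theorem zchoose_zero_succ (r : ℕ) : zchoose 0 (r + 1) = 0 := by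
  rw [zchoose_eq_choose, Ring.choose_zero_succ]

theorem zchoose_natCast_succ (r : ℕ) : zchoose (r : ℤ) (r + 1) = 0 := by
  rw [zchoose_eq_choose, Ring.choose_natCast]; simp

/-- The sign `(-1)^n` for an integer `n`. -/
def sg (n : ℤ) : ℤ := if Even n then 1 else -1

theorem sg_add_one (n : ℤ) : sg (n + 1) = -sg n := by
  unfold sg; by_cases h : Even n <;> simp [h, parity_simps]

theorem sg_sub_one (n : ℤ) : sg (n - 1) = -sg n := by
  have := sg_add_one (n - 1); simp at this; rw [this, neg_neg]

theorem sg_mul_self (n : ℤ) : sg n * sg n = 1 := by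
  unfold sg; split_ifs <;> norm_num

/-! ### Products of bounded operators -/

section Bounded

variable {A : Type*} [CommRing A]

/-- The operator has order at most `N`. -/
def OrdLE (N : ℤ) (f : ℤ → A) : Prop := ∀ i : ℤ, N < i → f i = 0

theorem OrdLE.mono {N M : ℤ} {f : ℤ → A} (h : OrdLE N f) (hNM : N ≤ M) : OrdLE M f :=
  fun i hi => h i (by omega)

theorem OrdLE.add {N : ℤ} {f g : ℤ → A} (h : OrdLE N f) (h' : OrdLE N g) : OrdLE N (f + g) :=
  fun i hi => by simp [h i hi, h' i hi]

theorem OrdLE.sub {N : ℤ} {f g : ℤ → A} (h : OrdLE N f) (h' : OrdLE N g) : OrdLE N (f - g) :=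
  fun i hi => by simp [h i hi, h' i hi]

theorem OrdLE.neg {N : ℤ} {f : ℤ → A} (h : OrdLE N f) : OrdLE N (-f) :=
  fun i hi => by simp [h i hi]

/-- The monomial `a D^k`. -/
def mono (k : ℤ) (a : A) : ℤ → A := fun i => if i = k then a else 0

theorem ordLE_mono (k : ℤ) (a : A) : OrdLE k (mono k a) :=
  fun i hi => by simp [mono, hi.ne']

theorem ordLE_Dk (k : ℤ) : OrdLE k (Dk k : ℤ → A) := ordLE_mono k 1

theorem ordLE_cst (a : A) : OrdLE 0 (cst a : ℤ → A) := ordLE_mono 0 a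

/-- An additive functional that only sees finitely many coefficients of bounded operators
vanishes as soon as it vanishes on monomials. -/
theorem functional_eq_zero {Φ : (ℤ → A) → A} {N L : ℤ}
    (hadd : ∀ f g, OrdLE N f → OrdLE N g → Φ (f + g) = Φ f + Φ g)
    (hlow : ∀ f, OrdLE L f → Φ f = 0)
    (hmono : ∀ k a, Φ (mono k a) = 0) {f : ℤ → A} (hf : OrdLE N f) : Φ f = 0 := by
  have key : ∀ n : ℕ, ∀ f, OrdLE N f → OrdLE (L + n) f → Φ f = 0 := by
    intro n
    induction n with
    | zero => intro f _ hf; exact hlow f (by simpa using hf)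
    | succ n ih =>
      intro f hN hf
      by_cases hle : L + (n + 1 : ℕ) ≤ N
      · have hm : OrdLE N (mono (L + (n + 1 : ℕ)) (f (L + (n + 1 : ℕ)))) :=
          (ordLE_mono _ _).mono hle
        have hr : OrdLE (L + n) (f - mono (L + (n + 1 : ℕ)) (f (L + (n + 1 : ℕ)))) := by
          intro i hi
          by_cases h : i = L + (n + 1 : ℕ)
          · subst h; simp [mono]
          · have : L + (n + 1 : ℕ) < i := by push_cast at h ⊢; omega
            simp only [Pi.sub_apply, mono, if_neg h, hf i this, sub_zero]
        have := hadd _ _ hm (hN.sub hm)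
        rw [add_sub_cancel, hmono, ih _ (hN.sub hm) hr, add_zero] at this
        exact this
      · exact ih f hN (hN.mono (by push_cast at hle ⊢; omega))
  exact key (N - L).toNat f hf (hf.mono (by omega))

variable (δ : Derivation ℤ A A)

/-- The product as a sum over an arbitrary sufficiently large box. -/
theorem mulM_eq_sum {f g : ℤ → A} {N M : ℤ} (hf : OrdLE N f) (hg : OrdLE M g) {s L : ℤ} {K : ℕ}
    (hL : L ≤ s - M) (hK : N + M - s < K) :
    mulM δ f g s = ∑ i ∈ Finset.Icc L N, ∑ r ∈ Finset.range K,
      zchoose i r • (f i * δ^[r] (g (s + r - i))) := by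
  classical
  unfold mulM
  let e : ℤ × ℕ → ℤ × ℤ := fun x => (x.1, s + x.2 - x.1)
  have he : Function.Injective e := by
    rintro ⟨i, r⟩ ⟨i', r'⟩ h
    simp only [e, Prod.mk.injEq] at h ⊢
    omega
  rw [finsum_eq_sum_of_support_subset (s := (Finset.Icc L N ×ˢ Finset.range K).image e),
    Finset.sum_image he.injOn, Finset.sum_product]
  · refine Finset.sum_congr rfl fun i _ => Finset.sum_congr rfl fun r _ => ?_
    have h1 : i + (s + (r : ℤ) - i) - s = r := by ring
    simp [e]
  · rintro ⟨i, j⟩ h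
    simp only [Function.mem_support] at h
    have hsij : s ≤ i + j := by by_contra hc; simp [hc] at h
    have hi : i ≤ N := by
      by_contra hc
      exact h (by simp [hf i (by omega)])
    have hj : j ≤ M := by
      by_contra hc
      exact h (by simp [hg j (by omega), iterate_map_zero])
    simp only [Finset.coe_image, Set.mem_image, Finset.mem_coe, Finset.mem_product,
      Finset.mem_Icc, Finset.mem_range]
    refine ⟨(i, (i + j - s).toNat), ⟨⟨by simp; omega, by simpa using hi⟩, by simp; omega⟩, ?_⟩
    simp only [e, Prod.mk.injEq, true_and]
    omega

variable {δ}

theorem OrdLE.mul {f g : ℤ → A} {N M : ℤ} (hf : OrdLE N f) (hg : OrdLE M g) :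
    OrdLE (N + M) (mulM δ f g) := by
  intro s hs
  rw [mulM_eq_sum δ hf hg (L := s - M) (K := 0) le_rfl (by simp; omega)]
  simp

/-- Leading coefficients multiply. -/
theorem mulM_lead {f g : ℤ → A} {N M : ℤ} (hf : OrdLE N f) (hg : OrdLE M g) {s : ℤ}
    (hs : s = N + M) : mulM δ f g s = f N * g M := by
  subst hs
  rw [mulM_eq_sum δ hf hg (L := N) (K := 1) (by omega) (by simp)]
  simp [zchoose_zero_right]

theorem mulM_add_left {f f' g : ℤ → A} {N M : ℤ} (hf : OrdLE N f) (hf' : OrdLE N f')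
    (hg : OrdLE M g) : mulM δ (f + f') g = mulM δ f g + mulM δ f' g := by
  funext s
  have hK : N + M - s < ((N + M - s).toNat + 1 : ℕ) := by omega
  rw [Pi.add_apply, mulM_eq_sum δ (hf.add hf') hg le_rfl hK, mulM_eq_sum δ hf hg le_rfl hK,
    mulM_eq_sum δ hf' hg le_rfl hK]
  simp only [← Finset.sum_add_distrib, Pi.add_apply, add_mul, smul_add]

theorem mulM_add_right {f g g' : ℤ → A} {N M : ℤ} (hf : OrdLE N f) (hg : OrdLE M g)
    (hg' : OrdLE M g') : mulM δ f (g + g') = mulM δ f g + mulM δ f g' := by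
  funext s
  have hK : N + M - s < ((N + M - s).toNat + 1 : ℕ) := by omega
  rw [Pi.add_apply, mulM_eq_sum δ hf (hg.add hg') le_rfl hK, mulM_eq_sum δ hf hg le_rfl hK,
    mulM_eq_sum δ hf hg' le_rfl hK]
  simp only [← Finset.sum_add_distrib, Pi.add_apply, iterate_map_add, mul_add, smul_add]

theorem mulM_zero_left (g : ℤ → A) : mulM δ 0 g = 0 := by
  funext s; simp [mulM]

theorem mulM_zero_right (f : ℤ → A) : mulM δ f 0 = 0 := by
  funext s; simp [mulM, iterate_map_zero]

theorem mulM_neg_left {f g : ℤ → A} {N M : ℤ} (hf : OrdLE N f) (hg : OrdLE M g) :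
    mulM δ (-f) g = -mulM δ f g := by
  have := mulM_add_left (δ := δ) hf.neg hf hg
  rw [neg_add_cancel, mulM_zero_left] at this
  exact eq_neg_of_add_eq_zero_left this.symm

theorem mulM_neg_right {f g : ℤ → A} {N M : ℤ} (hf : OrdLE N f) (hg : OrdLE M g) :
    mulM δ f (-g) = -mulM δ f g := by
  have := mulM_add_right (δ := δ) hf hg.neg hg
  rw [neg_add_cancel, mulM_zero_right] at this
  exact eq_neg_of_add_eq_zero_left this.symm

theorem mulM_sub_left {f f' g : ℤ → A} {N M : ℤ} (hf : OrdLE N f) (hf' : OrdLE N f')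
    (hg : OrdLE M g) : mulM δ (f - f') g = mulM δ f g - mulM δ f' g := by
  rw [sub_eq_add_neg, mulM_add_left hf hf'.neg hg, mulM_neg_left hf' hg, sub_eq_add_neg]

theorem mulM_sub_right {f g g' : ℤ → A} {N M : ℤ} (hf : OrdLE N f) (hg : OrdLE M g)
    (hg' : OrdLE M g') : mulM δ f (g - g') = mulM δ f g - mulM δ f g' := by
  rw [sub_eq_add_neg, mulM_add_right hf hg hg'.neg, mulM_neg_right hf hg', sub_eq_add_neg]

theorem mulM_smul_left {f g : ℤ → A} {N M : ℤ} (hf : OrdLE N f) (hg : OrdLE M g) (a : A) :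
    mulM δ (a • f) g = a • mulM δ f g := by
  funext s
  have hK : N + M - s < ((N + M - s).toNat + 1 : ℕ) := by omega
  have haf : OrdLE N (a • f) := fun i hi => by simp [hf i hi]
  rw [Pi.smul_apply, mulM_eq_sum δ haf hg le_rfl hK, mulM_eq_sum δ hf hg le_rfl hK]
  simp only [Pi.smul_apply, smul_eq_mul, mul_assoc, Finset.mul_sum, mul_smul_comm]

theorem OrdLE.shift {g : ℤ → A} {M : ℤ} (hg : OrdLE M g) (k : ℤ) :
    OrdLE (M + k) (fun s => g (s - k)) := fun i hi => hg _ (by omega)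

theorem mulM_shift_right {f g : ℤ → A} {N M : ℤ} (hf : OrdLE N f) (hg : OrdLE M g) (k s : ℤ) :
    mulM δ f (fun t => g (t - k)) s = mulM δ f g (s - k) := by
  have hK : N + M - (s - k) < ((N + M - (s - k)).toNat + 1 : ℕ) := by omega
  rw [mulM_eq_sum δ hf hg le_rfl hK,
    mulM_eq_sum δ hf (hg.shift k) (L := s - k - M) (K := (N + M - (s - k)).toNat + 1) (by omega) (by omega)]
  refine Finset.sum_congr rfl fun i _ => Finset.sum_congr rfl fun r _ => ?_
  have : s + (r : ℤ) - i - k = s - k + r - i := by ring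
  rw [this]

theorem iterate_one_eq (r : ℕ) : δ^[r + 1] (1 : A) = 0 := by
  rw [Function.iterate_succ_apply, Derivation.map_one_eq_zero, iterate_map_zero]

theorem mulM_one_right {f : ℤ → A} {N : ℤ} (hf : OrdLE N f) : mulM δ f (Dk 0) = f := by
  funext s
  have hK : N + 0 - s < ((N + 0 - s).toNat + 1 : ℕ) := by omega
  rw [mulM_eq_sum δ hf (ordLE_Dk 0) le_rfl hK]
  simp only [Finset.sum_range_succ']
  have h1 : ∀ i : ℤ, ∀ r : ℕ,
      zchoose i (r + 1) • (f i * δ^[r + 1] ((Dk 0 : ℤ → A) (s + (r + 1 : ℕ) - i))) = 0 := by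
    intro i r
    unfold Dk
    split_ifs
    · rw [iterate_one_eq]; simp
    · rw [iterate_map_zero]; simp
  simp only [h1, Finset.sum_const_zero, zero_add, zchoose_zero_right]
  by_cases hs : s ≤ N
  · rw [Finset.sum_eq_single s]
    · simp [Dk]
    · intro i _ hi
      have : ¬ (s - i = 0) := by omega
      simp [Dk, this]
    · intro h; simp at h; omega
  · rw [hf s (by omega)]
    refine Finset.sum_eq_zero fun i hi => ?_
    simp only [Finset.mem_Icc] at hi
    have : ¬ (s - i = 0) := by omega
    simp [Dk, this]

theorem Dk_eq_shift (k : ℤ) : (Dk k : ℤ → A) = fun t => Dk 0 (t - k) := by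
  funext t; simp only [Dk, sub_eq_zero]

/-- Right multiplication by `D^k` is a shift of coefficients. -/
theorem mulM_Dk_right {f : ℤ → A} {N : ℤ} (hf : OrdLE N f) (k s : ℤ) :
    mulM δ f (Dk k) s = f (s - k) := by
  rw [Dk_eq_shift, mulM_shift_right hf (ordLE_Dk 0), mulM_one_right hf]

/-- Left multiplication by `D^k` acts by the generalized Leibniz rule. -/
theorem mulM_Dk_left {g : ℤ → A} {M : ℤ} (hg : OrdLE M g) {k s : ℤ} {K : ℕ}
    (hK : k + M - s < K) :
    mulM δ (Dk k) g s = ∑ r ∈ Finset.range K, zchoose k r • δ^[r] (g (s + r - k)) := by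
  rw [mulM_eq_sum δ (ordLE_Dk k) hg (L := min k (s - M)) (by omega) hK,
    Finset.sum_eq_single k]
  · simp [Dk]
  · intro i _ hi; simp [Dk, hi]
  · intro h; simp at h

theorem mulM_one_left {g : ℤ → A} {M : ℤ} (hg : OrdLE M g) : mulM δ (Dk 0) g = g := by
  funext s
  have hK : 0 + M - s < ((0 + M - s).toNat + 1 : ℕ) := by omega
  rw [mulM_Dk_left hg hK, Finset.sum_range_succ']
  simp [zchoose_zero_right, zchoose_zero_succ]

theorem mulM_D_left {g : ℤ → A} {M : ℤ} (hg : OrdLE M g) (s : ℤ) :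
    mulM δ (Dk 1) g s = δ (g s) + g (s - 1) := by
  have hK : 1 + M - s < ((1 + M - s).toNat + 2 : ℕ) := by omega
  have h : ∀ r : ℕ, zchoose 1 (r + 2) = 0 := fun r => by
    have := zchoose_succ 0 (r + 1)
    rwa [zchoose_zero_succ, zchoose_zero_succ] at this
  have h1 : zchoose 1 1 = 1 := by
    have := zchoose_succ 0 0
    rwa [zchoose_zero_succ, zchoose_zero_right] at this
  rw [mulM_Dk_left hg hK, Finset.sum_range_succ', Finset.sum_range_succ']
  simp [zchoose_zero_right, h, h1]

theorem mulM_mono_left {g : ℤ → A} {M : ℤ} (hg : OrdLE M g) (k : ℤ) (a : A) :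
    mulM δ (mono k a) g = a • mulM δ (Dk k) g := by
  rw [← mulM_smul_left (ordLE_Dk k) hg]
  congr 1
  funext i; simp [mono, Dk]

theorem mulM_cst_left {g : ℤ → A} {M : ℤ} (hg : OrdLE M g) (a : A) :
    mulM δ (cst a) g = a • g := by
  have := mulM_mono_left (δ := δ) hg 0 a
  rwa [mulM_one_left hg] at this

/-! ### Associativity -/

/-- The leading coefficient of `D f` is that of `f`, so `D f = 0` forces `f = 0`. -/
theorem D_injective {f : ℤ → A} {N : ℤ} (hf : OrdLE N f) (h : mulM δ (Dk 1) f = 0) : f = 0 := by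
  have key : ∀ n : ℕ, OrdLE (N - n) f := by
    intro n
    induction n with
    | zero => simpa using hf
    | succ n ih =>
      intro i hi
      have h1 := congrFun h (i + 1)
      rw [mulM_D_left hf, ih (i + 1) (by push_cast at hi; omega)] at h1
      simpa using h1
  funext i
  exact key ((N - i).toNat + 1) i (by push_cast; omega)

/-- Associativity when the leftmost factor is `D`: the Leibniz rule for `d`, combined with Pascal's
rule for the coefficients. -/
theorem D_mul_mul {f g : ℤ → A} {N M : ℤ} (hf : OrdLE N f) (hg : OrdLE M g) :
    mulM δ (mulM δ (Dk 1) f) g = mulM δ (Dk 1) (mulM δ f g) := by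
  have hdf : OrdLE (N + 1) (fun s => δ (f s)) := fun i hi => by
    show δ (f i) = 0
    rw [hf i (by omega), map_zero]
  have hD : mulM δ (Dk 1) f = (fun s => δ (f s)) + (fun s => f (s - 1)) := by
    funext s; rw [mulM_D_left hf]; rfl
  funext s
  set K := (N + M - s).toNat + 1 with hKdef
  have hK : N + M - s < K := by omega
  have h2 : mulM δ (fun s => f (s - 1)) g s =
      ∑ i ∈ Finset.Icc (s - M - 1) N, ∑ r ∈ Finset.range (K + 1),
      zchoose (i + 1) r • (f i * δ^[r] (g (s - 1 + r - i))) := by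
    rw [mulM_eq_sum δ (hf.shift 1) hg (L := s - M) (K := K + 1) le_rfl (by push_cast; omega)]
    refine Finset.sum_nbij' (fun i => i - 1) (fun i => i + 1) ?_ ?_ ?_ ?_ ?_
    · intro i; simp only [Finset.mem_Icc]; omega
    · intro i; simp only [Finset.mem_Icc]; omega
    · intro i _; simp
    · intro i _; simp
    · intro i _
      refine Finset.sum_congr rfl fun r _ => ?_
      have e1 : s - 1 + (r : ℤ) - (i - 1) = s + r - i := by ring
      rw [e1, sub_add_cancel]
  have hdf' : OrdLE N (fun s => δ (f s)) := fun i hi => by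
    show δ (f i) = 0
    rw [hf i hi, map_zero]
  rw [hD, mulM_add_left hdf (hf.shift 1) hg, Pi.add_apply, h2, mulM_D_left (hf.mul hg),
    mulM_eq_sum δ hdf' hg (L := s - M - 1) (K := K) (by omega) hK,
    mulM_eq_sum δ hf hg (L := s - M - 1) (K := K) (by omega) hK,
    mulM_eq_sum δ hf hg (s := s - 1) (L := s - M - 1) (K := K + 1) (by omega) (by push_cast; omega)]
  simp only [map_sum, ← Finset.sum_add_distrib]
  refine Finset.sum_congr rfl fun i _ => ?_
  simp only [Finset.sum_range_succ' _ K, ← add_assoc, ← Finset.sum_add_distrib]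
  congr 1
  · refine Finset.sum_congr rfl fun r _ => ?_
    have e1 : s - 1 + ((r + 1 : ℕ) : ℤ) - i = s + r - i := by push_cast; ring
    rw [e1, zchoose_succ, Function.iterate_succ_apply']
    simp only [map_zsmul, Derivation.leibniz, smul_eq_mul, smul_add, add_smul]
    rw [mul_comm (δ (f i))]
    abel

theorem D_mul_Dk {g : ℤ → A} {M : ℤ} (hg : OrdLE M g) (k : ℤ) :
    mulM δ (Dk 1) (mulM δ (Dk k) g) = mulM δ (Dk (k + 1)) g := by
  have e : mulM δ (Dk 1) (Dk k) = (Dk (k + 1) : ℤ → A) := by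
    funext s
    rw [mulM_Dk_right (ordLE_Dk 1)]
    simp only [Dk, sub_eq_iff_eq_add, add_comm]
  rw [← D_mul_mul (ordLE_Dk k) hg, e]

theorem Dk_mul_mul {f g : ℤ → A} {N M : ℤ} (hf : OrdLE N f) (hg : OrdLE M g) (k : ℤ) :
    mulM δ (mulM δ (Dk k) f) g = mulM δ (Dk k) (mulM δ f g) := by
  induction k using Int.induction_on with
  | zero => rw [mulM_one_left hf, mulM_one_left (hf.mul hg)]
  | succ k ih =>
    rw [← D_mul_Dk hf, D_mul_mul ((ordLE_Dk _).mul hf) hg, ih, D_mul_Dk (hf.mul hg)]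
  | pred k ih =>
    -- Multiplying on the left by `D` is injective and turns `D^(-k-1)` into `D^(-k)`.
    rw [← sub_eq_zero]
    have b1 := ((ordLE_Dk (-(k : ℤ) - 1)).mul (δ := δ) hf).mul (δ := δ) hg
    have b2 := (ordLE_Dk (-(k : ℤ) - 1)).mul (δ := δ) (hf.mul (δ := δ) hg)
    rw [← add_assoc] at b2
    refine D_injective (δ := δ) (b1.sub b2) ?_
    rw [mulM_sub_right (ordLE_Dk 1) b1 b2, ← D_mul_mul ((ordLE_Dk _).mul hf) hg, D_mul_Dk hf,
      D_mul_Dk (hf.mul hg), sub_add_cancel, ih, sub_self]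

theorem mulM_assoc {f g h : ℤ → A} {N M R : ℤ} (hf : OrdLE N f) (hg : OrdLE M g)
    (hh : OrdLE R h) : mulM δ (mulM δ f g) h = mulM δ f (mulM δ g h) := by
  funext s
  rw [← sub_eq_zero]
  refine functional_eq_zero (N := N) (L := s - 1 - M - R)
    (Φ := fun f => mulM δ (mulM δ f g) h s - mulM δ f (mulM δ g h) s) ?_ ?_ ?_ hf
  · intro f f' hf hf'
    rw [mulM_add_left hf hf' hg, mulM_add_left (hf.mul hg) (hf'.mul hg) hh,
      mulM_add_left hf hf' (hg.mul hh), Pi.add_apply, Pi.add_apply]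
    ring
  · intro f hf
    rw [((hf.mul hg).mul hh) s (by omega), (hf.mul (hg.mul hh)) s (by omega), sub_zero]
  · intro k a
    rw [mulM_mono_left hg, mulM_mono_left (hg.mul hh),
      mulM_smul_left ((ordLE_Dk k).mul hg) hh, Dk_mul_mul hg hh, sub_self]

/-! ### The formal adjoint -/

variable (δ) in
theorem adjM_eq_sum {f : ℤ → A} {N : ℤ} (hf : OrdLE N f) {s : ℤ} {K : ℕ} (hK : N - s < K) :
    adjM δ f s = ∑ r ∈ Finset.range K,
      (sg (s + r) * zchoose (s + r) r) • δ^[r] (f (s + r)) := by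
  have hsg : ∀ n m : ℤ, (if Even n then m else -m) = sg n * m := by
    intro n m; unfold sg; split_ifs <;> simp
  unfold adjM
  simp only [hsg]
  refine finsum_eq_sum_of_support_subset _ fun r hr => ?_
  rw [Function.mem_support] at hr
  simp only [Finset.coe_range, Set.mem_Iio]
  by_contra hc
  exact hr (by rw [hf _ (by omega), iterate_map_zero, smul_zero])

theorem OrdLE.adj {f : ℤ → A} {N : ℤ} (hf : OrdLE N f) : OrdLE N (adjM δ f) := by
  intro s hs
  rw [adjM_eq_sum δ hf (K := 0) (by simp; omega)]
  simp

theorem adjM_lead {f : ℤ → A} {N : ℤ} (hf : OrdLE N f) : adjM δ f N = sg N • f N := by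
  rw [adjM_eq_sum δ hf (K := 1) (by simp)]
  simp [zchoose_zero_right]

theorem adjM_add {f g : ℤ → A} {N : ℤ} (hf : OrdLE N f) (hg : OrdLE N g) :
    adjM δ (f + g) = adjM δ f + adjM δ g := by
  funext s
  have hK : N - s < ((N - s).toNat + 1 : ℕ) := by omega
  rw [Pi.add_apply, adjM_eq_sum δ (hf.add hg) hK, adjM_eq_sum δ hf hK, adjM_eq_sum δ hg hK]
  simp only [← Finset.sum_add_distrib, Pi.add_apply, iterate_map_add, smul_add]

theorem iterate_zsmul (r : ℕ) (n : ℤ) (x : A) : δ^[r] (n • x) = n • δ^[r] x := by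
  induction r with
  | zero => simp
  | succ r ih => rw [Function.iterate_succ_apply', Function.iterate_succ_apply', ih, map_zsmul]

theorem adjM_zsmul {f : ℤ → A} {N : ℤ} (hf : OrdLE N f) (n : ℤ) :
    adjM δ (n • f) = n • adjM δ f := by
  funext s
  have hK : N - s < ((N - s).toNat + 1 : ℕ) := by omega
  have hnf : OrdLE N (n • f) := fun i hi => by simp [hf i hi]
  rw [Pi.smul_apply, adjM_eq_sum δ hnf hK, adjM_eq_sum δ hf hK, Finset.smul_sum]
  refine Finset.sum_congr rfl fun r _ => ?_
  rw [Pi.smul_apply, smul_comm n, iterate_zsmul]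

/-- The residue changes sign under the adjoint. -/
theorem adjM_residue {f : ℤ → A} {N : ℤ} (hf : OrdLE N f) : adjM δ f (-1) = -f (-1) := by
  have hK : N - (-1) < ((N - (-1)).toNat + 1 : ℕ) := by omega
  rw [adjM_eq_sum δ hf hK, Finset.sum_range_succ']
  have h : ∀ r : ℕ, zchoose (-1 + ((r + 1 : ℕ) : ℤ)) (r + 1) = 0 := fun r => by
    rw [show (-1 + ((r + 1 : ℕ) : ℤ)) = r by push_cast; ring, zchoose_natCast_succ]
  have h1 : sg (-1) = -1 := by decide
  simp only [h]
  simp [zchoose_zero_right, h1]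

/-- `(a D^k)^* = (-1)^k D^k a`. -/
theorem adjM_mono (k : ℤ) (a : A) : adjM δ (mono k a) = sg k • mulM δ (Dk k) (cst a) := by
  funext s
  have hK : k - s < ((k - s).toNat + 1 : ℕ) := by omega
  rw [Pi.smul_apply, adjM_eq_sum δ (ordLE_mono k a) hK,
    mulM_Dk_left (ordLE_cst a) (K := (k - s).toNat + 1) (by omega), Finset.smul_sum]
  refine Finset.sum_congr rfl fun r _ => ?_
  by_cases h : s + (r : ℤ) = k
  · simp [mono, cst, h, mul_smul]
  · have h' : ¬ (s + (r : ℤ) - k = 0) := by omega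
    simp only [mono, cst, if_neg h, if_neg h', iterate_map_zero, smul_zero]

theorem mulM_zsmul_right {f g : ℤ → A} {N M : ℤ} (hf : OrdLE N f) (hg : OrdLE M g) (n : ℤ) :
    mulM δ f (n • g) = n • mulM δ f g := by
  funext s
  have hK : N + M - s < ((N + M - s).toNat + 1 : ℕ) := by omega
  have hng : OrdLE M (n • g) := fun i hi => by simp [hg i hi]
  rw [Pi.smul_apply, mulM_eq_sum δ hf hng le_rfl hK, mulM_eq_sum δ hf hg le_rfl hK]
  simp only [Finset.smul_sum, Pi.smul_apply, iterate_zsmul, mul_smul_comm, smul_comm n]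

theorem mulM_zsmul_left {f g : ℤ → A} {N M : ℤ} (hf : OrdLE N f) (hg : OrdLE M g) (n : ℤ) :
    mulM δ (n • f) g = n • mulM δ f g := by
  have := mulM_smul_left (δ := δ) hf hg (n : A)
  have e : ∀ h : ℤ → A, (n : A) • h = n • h := fun h => by
    funext i; simp
  rwa [e, e] at this

theorem OrdLE.zsmul {N : ℤ} {f : ℤ → A} (h : OrdLE N f) (n : ℤ) : OrdLE N (n • f) :=
  fun i hi => by simp [h i hi]

theorem OrdLE.smul {N : ℤ} {f : ℤ → A} (h : OrdLE N f) (a : A) : OrdLE N (a • f) :=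
  fun i hi => by simp [h i hi]

/-- `(a Y)^* = Y^* a`. -/
theorem adjM_smul {f : ℤ → A} {N : ℤ} (hf : OrdLE N f) (a : A) :
    adjM δ (a • f) = mulM δ (adjM δ f) (cst a) := by
  funext s
  rw [← sub_eq_zero]
  refine functional_eq_zero (N := N) (L := s - 1)
    (Φ := fun f => adjM δ (a • f) s - mulM δ (adjM δ f) (cst a) s) ?_ ?_ ?_ hf
  · intro f f' hf hf'
    simp only [smul_add]
    rw [adjM_add (hf.smul a) (hf'.smul a), adjM_add hf hf',
      mulM_add_left hf.adj hf'.adj (ordLE_cst a), Pi.add_apply, Pi.add_apply]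
    ring
  · intro f hf
    rw [(hf.smul a).adj s (by omega), hf.adj.mul (ordLE_cst a) s (by omega), sub_zero]
  · intro k b
    have e : a • mono k b = mono k (b * a) := by
      funext i; simp [mono, mul_comm]
    have e' : mulM δ (cst b) (cst a) = cst (b * a) := by
      rw [mulM_cst_left (ordLE_cst a)]
      funext i; simp [cst]
    simp only [e, adjM_mono]
    rw [mulM_zsmul_left ((ordLE_Dk k).mul (ordLE_cst b)) (ordLE_cst a),
      Dk_mul_mul (ordLE_cst b) (ordLE_cst a), e', sub_self]

/-- `(D Y)^* = -Y^* D`. -/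
theorem adjM_D_mul {f : ℤ → A} {N : ℤ} (hf : OrdLE N f) (s : ℤ) :
    adjM δ (mulM δ (Dk 1) f) s = -adjM δ f (s - 1) := by
  have hDf := (ordLE_Dk 1).mul (δ := δ) hf
  rw [adjM_eq_sum δ hDf (K := (1 + N - s).toNat + 1 + 1) (by omega),
    adjM_eq_sum δ hf (K := (1 + N - s).toNat + 1 + 1) (by omega)]
  generalize hKdef : (1 + N - s).toNat + 1 = K at *
  simp only [mulM_D_left hf, iterate_map_add, smul_add, Finset.sum_add_distrib,
    ← Function.iterate_succ_apply]
  -- The top summand of the first sum vanishes; discarding it aligns the indices.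
  rw [Finset.sum_range_succ (n := K), hf (s + K) (by omega), iterate_map_zero, smul_zero, add_zero,
    Finset.sum_range_succ' (n := K), Finset.sum_range_succ' (n := K), neg_add, ← add_assoc,
    ← Finset.sum_neg_distrib, ← Finset.sum_add_distrib]
  congr 1
  · refine Finset.sum_congr rfl fun r _ => ?_
    have e1 : s - 1 + ((r + 1 : ℕ) : ℤ) = s + r := by push_cast; ring
    have e2 : s + ((r + 1 : ℕ) : ℤ) - 1 = s + r := by push_cast; ring
    have e3 : s + ((r + 1 : ℕ) : ℤ) = s + r + 1 := by push_cast; ring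
    rw [e1, e2, e3, zchoose_succ, sg_add_one, ← neg_smul, ← add_smul]
    congr 1
    ring
  · simp [zchoose_zero_right, sg_sub_one]

/-- `(D^k Y)^* = (-1)^k Y^* D^k`. -/
theorem adjM_Dk_mul {f : ℤ → A} {N : ℤ} (hf : OrdLE N f) (k s : ℤ) :
    adjM δ (mulM δ (Dk k) f) s = sg k • adjM δ f (s - k) := by
  induction k using Int.induction_on generalizing s with
  | zero => simp [mulM_one_left hf, sg]
  | succ k ih =>
    rw [← D_mul_Dk hf, adjM_D_mul ((ordLE_Dk _).mul hf), ih, sg_add_one, neg_smul]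
    congr 3; ring
  | pred k ih =>
    have := ih (s + 1)
    rw [show -(k : ℤ) = -k - 1 + 1 by ring, ← D_mul_Dk hf,
      adjM_D_mul ((ordLE_Dk _).mul hf), sg_add_one, neg_smul, neg_inj] at this
    rw [add_sub_cancel_right] at this
    rw [this]
    congr 2; ring

/-- The adjoint reverses products. -/
theorem adjM_mul {f g : ℤ → A} {N M : ℤ} (hf : OrdLE N f) (hg : OrdLE M g) :
    adjM δ (mulM δ f g) = mulM δ (adjM δ g) (adjM δ f) := by
  funext s
  rw [← sub_eq_zero]
  refine functional_eq_zero (N := N) (L := s - 1 - M)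
    (Φ := fun f => adjM δ (mulM δ f g) s - mulM δ (adjM δ g) (adjM δ f) s) ?_ ?_ ?_ hf
  · intro f f' hf hf'
    rw [mulM_add_left hf hf' hg, adjM_add (hf.mul hg) (hf'.mul hg), adjM_add hf hf',
      mulM_add_right hg.adj hf.adj hf'.adj, Pi.add_apply, Pi.add_apply]
    ring
  · intro f hf
    rw [(hf.mul hg).adj s (by omega), hg.adj.mul hf.adj s (by omega), sub_zero]
  · intro k a
    have hD : adjM δ (mulM δ (Dk k) g) = sg k • mulM δ (adjM δ g) (Dk k) := by
      funext t
      rw [adjM_Dk_mul hg, Pi.smul_apply, mulM_Dk_right hg.adj]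
    rw [mulM_mono_left hg, adjM_smul ((ordLE_Dk k).mul hg), hD, adjM_mono,
      mulM_zsmul_left (hg.adj.mul (ordLE_Dk k)) (ordLE_cst a),
      mulM_zsmul_right hg.adj ((ordLE_Dk k).mul (ordLE_cst a)),
      mulM_assoc hg.adj (ordLE_Dk k) (ordLE_cst a), sub_self]

theorem adjM_adjM {f : ℤ → A} {N : ℤ} (hf : OrdLE N f) : adjM δ (adjM δ f) = f := by
  funext s
  rw [← sub_eq_zero]
  refine functional_eq_zero (N := N) (L := s - 1)
    (Φ := fun f => adjM δ (adjM δ f) s - f s) ?_ ?_ ?_ hf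
  · intro f f' hf hf'
    rw [adjM_add hf hf', adjM_add hf.adj hf'.adj, Pi.add_apply, Pi.add_apply]
    ring
  · intro f hf
    rw [hf.adj.adj s (by omega), hf s (by omega), sub_zero]
  · intro k a
    have h0 : mulM δ (Dk 0) (cst a) = cst a := mulM_one_left (ordLE_cst a)
    have hc : adjM δ (cst a) = cst a := by
      have := adjM_mono (δ := δ) 0 a
      rw [h0] at this
      have h1 : sg 0 = 1 := by decide
      rw [h1, one_smul] at this
      exact this
    simp only [adjM_mono]
    rw [adjM_zsmul ((ordLE_Dk k).mul (ordLE_cst a)), Pi.smul_apply, adjM_Dk_mul (ordLE_cst a),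
      hc, smul_smul, sg_mul_self, one_smul]
    simp [cst, mono, sub_eq_zero]

theorem adjM_Dk (k : ℤ) : adjM δ (Dk k) = sg k • Dk k := by
  have := adjM_mono (δ := δ) k 1
  have e : (cst 1 : ℤ → A) = Dk 0 := rfl
  rwa [e, mulM_one_right (ordLE_Dk k)] at this

/-! ### The operators `P^k D^{-1}` -/

variable (δ) in
/-- The operator `(X D)^k D^{-1}`: for `k ≥ 1` it is `X D X D ⋯ D X` with `k` factors `X`, and for
`k = 0` it is `D^{-1}`. -/
noncomputable def alt (X : ℤ → A) : ℕ → ℤ → A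
  | 0 => Dinv
  | k + 1 => mulM δ X (mulM δ (Dk 1) (alt X k))

theorem ordLE_alt {X : ℤ → A} (hX : OrdLE 0 X) (k : ℕ) : OrdLE (k - 1) (alt δ X k) := by
  induction k with
  | zero => simpa [alt, Dinv] using ordLE_Dk (A := A) (-1)
  | succ k ih => exact (hX.mul ((ordLE_Dk 1).mul ih)).mono (by push_cast; omega)

theorem alt_lead {X : ℤ → A} (hX : OrdLE 0 X) (h1 : X 0 = 1) (k : ℕ) :
    alt δ X k (k - 1) = 1 := by
  induction k with
  | zero => simp [alt, Dinv, Dk]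
  | succ k ih =>
    rw [alt, mulM_lead hX ((ordLE_Dk 1).mul (ordLE_alt hX k)) (by push_cast; ring), h1, one_mul,
      mulM_lead (ordLE_Dk 1) (ordLE_alt hX k) rfl, ih]
    simp [Dk]

theorem D_mul_Dinv : mulM δ (Dk 1) Dinv = (Dk 0 : ℤ → A) := by
  funext s
  rw [Dinv, mulM_Dk_right (ordLE_Dk 1)]
  simp [Dk]

theorem alt_succ_right {X : ℤ → A} (hX : OrdLE 0 X) (k : ℕ) :
    alt δ X (k + 1) = mulM δ (alt δ X k) (mulM δ (Dk 1) X) := by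
  have hDX := (ordLE_Dk 1).mul (δ := δ) hX
  induction k with
  | zero =>
    have : mulM δ Dinv (mulM δ (Dk 1) X) = X := by
      rw [Dinv, ← Dk_mul_mul (ordLE_Dk 1) hX]
      have : mulM δ (Dk (-1)) (Dk 1) = (Dk 0 : ℤ → A) := by
        funext s
        rw [mulM_Dk_right (ordLE_Dk (-1))]
        simp only [Dk, sub_eq_iff_eq_add]
        norm_num
      rw [this, mulM_one_left hX]
    have h0 : alt δ X 0 = Dinv := rfl
    have h1 : alt δ X (0 + 1) = mulM δ X (mulM δ (Dk 1) Dinv) := rfl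
    rw [h1, h0, this, D_mul_Dinv, mulM_one_right hX]
  | succ k ih =>
    have hk := ordLE_alt (δ := δ) hX k
    have h1 : alt δ X (k + 1) = mulM δ X (mulM δ (Dk 1) (alt δ X k)) := rfl
    rw [alt, ih, ← D_mul_mul hk hDX, ← mulM_assoc hX ((ordLE_Dk 1).mul hk) hDX, ← h1, ih]

theorem adjM_alt {X : ℤ → A} (hX : OrdLE 0 X) (k : ℕ) :
    adjM δ (alt δ X k) = sg (k + 1) • alt δ (adjM δ X) k := by
  induction k with
  | zero =>
    have : sg (-1) = sg ((0 : ℕ) + 1) := by decide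
    rw [alt, alt, Dinv, adjM_Dk, this]
  | succ k ih =>
    have hk := ordLE_alt (δ := δ) hX k
    have hk' := ordLE_alt (δ := δ) (hX.adj (δ := δ)) k
    rw [alt, adjM_mul hX ((ordLE_Dk 1).mul hk), adjM_mul (ordLE_Dk 1) hk, ih, adjM_Dk,
      mulM_zsmul_right (hk'.zsmul _) (ordLE_Dk 1), mulM_zsmul_left hk' (ordLE_Dk 1), smul_smul,
      mulM_zsmul_left (hk'.mul (ordLE_Dk 1)) hX.adj, mulM_assoc hk' (ordLE_Dk 1) hX.adj,
      ← alt_succ_right hX.adj]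
    congr 1
    have : sg 1 = -1 := by decide
    rw [this, Nat.cast_add_one, sg_add_one ((k : ℤ) + 1)]; ring

/-- If `X` and `Y` have order `0` and leading coefficient `1`, and `X - Y = v D^m + ⋯` up to lower
order, then the difference of the operators `X D X ⋯ D X` and `Y D Y ⋯ D Y` with `k` factors is
`k v D^{m+k-1}` up to lower order. -/
theorem alt_sub {X Y : ℤ → A} (hX : OrdLE 0 X) (hY : OrdLE 0 Y) (hX1 : X 0 = 1) (hY1 : Y 0 = 1)
    {m : ℤ} (hV : OrdLE m (X - Y)) (k : ℕ) :
    OrdLE (m + k - 1) (alt δ X k - alt δ Y k) ∧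
      (alt δ X k - alt δ Y k) (m + k - 1) = k * (X - Y) m := by
  induction k with
  | zero => simp [alt, OrdLE]
  | succ k ih =>
    have hk := ordLE_alt (δ := δ) hX k
    have hk' := ordLE_alt (δ := δ) hY k
    have hDk := (ordLE_Dk 1).mul (δ := δ) hk
    have hDk' := (ordLE_Dk 1).mul (δ := δ) hk'
    have e : alt δ X (k + 1) - alt δ Y (k + 1) =
        mulM δ (X - Y) (mulM δ (Dk 1) (alt δ X k)) +
          mulM δ Y (mulM δ (Dk 1) (alt δ X k - alt δ Y k)) := by
      rw [alt, alt, mulM_sub_left hX hY hDk, mulM_sub_right (ordLE_Dk 1) hk hk',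
        mulM_sub_right hY hDk hDk']
      abel
    have hDd := (ordLE_Dk 1).mul (δ := δ) ih.1
    rw [e]
    refine ⟨((hV.mul hDk).mono (by push_cast; omega)).add
      ((hY.mul hDd).mono (by push_cast; omega)), ?_⟩
    rw [Pi.add_apply, mulM_lead hV hDk (by push_cast; ring), mulM_lead hY hDd (by push_cast; ring),
      mulM_lead (ordLE_Dk 1) hk rfl, mulM_lead (ordLE_Dk 1) ih.1 rfl, alt_lead hX hX1, ih.2, hY1]
    simp [Dk]
    ring

/-- `P^k D^{-1} = T D T ⋯ D T` for `T = P D^{-1}`, coefficient by coefficient. -/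
theorem powM_eq_alt {P : ℤ → A} (hP : OrdLE 1 P) (k : ℕ) (s : ℤ) :
    powM δ P k s = alt δ (fun s => P (s + 1)) k (s - 1) := by
  have hT : OrdLE 0 (fun s => P (s + 1)) := fun i hi => hP _ (by omega)
  induction k generalizing s with
  | zero => simp [powM, oneM, alt, Dinv, Dk]
  | succ k ih =>
    have hk := ordLE_alt (δ := δ) hT k
    have e : powM δ P k = fun s => alt δ (fun s => P (s + 1)) k (s - 1) := funext ih
    have e' : P = mulM δ (fun s => P (s + 1)) (Dk 1) := by
      funext s; rw [mulM_Dk_right hT]; simp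
    rw [powM, alt, ← mulM_assoc hT (ordLE_Dk 1) hk, ← e', e, mulM_shift_right hP hk]

/-- The constraint on `P` says that `P D^{-1}` is self-adjoint. -/
theorem adj_condition_iff {P : ℤ → A} (hP : OrdLE 1 P) :
    (adjM δ P = fun s => -(mulM δ (Dk 1) (mulM δ P Dinv) s)) ↔
      adjM δ (fun s => P (s + 1)) = fun s => P (s + 1) := by
  have hT : OrdLE 0 (fun s => P (s + 1)) := fun i hi => hP _ (by omega)
  have e1 : mulM δ P Dinv = fun s => P (s + 1) := by
    funext s; rw [Dinv, mulM_Dk_right hP]; simp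
  have e' : P = mulM δ (fun s => P (s + 1)) (Dk 1) := by
    funext s; rw [mulM_Dk_right hT]; simp
  have e2 : adjM δ P = -mulM δ (Dk 1) (adjM δ fun s => P (s + 1)) := by
    conv_lhs => rw [e']
    have : sg 1 = -1 := by decide
    rw [adjM_mul hT (ordLE_Dk 1), adjM_Dk, mulM_zsmul_left (ordLE_Dk 1) hT.adj, this]
    simp
  rw [e1, e2]
  constructor
  · intro h
    have h' : mulM δ (Dk 1) (adjM δ fun s => P (s + 1)) = mulM δ (Dk 1) fun s => P (s + 1) :=
      neg_injective h
    have := D_injective (δ := δ) (hT.adj.sub hT) (by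
      rw [mulM_sub_right (ordLE_Dk 1) hT.adj hT, h', sub_self])
    exact sub_eq_zero.mp this
  · intro h
    rw [h]; rfl

theorem eq_zero_of_natCast_mul [Algebra ℚ A] {n : ℕ} (hn : n ≠ 0) {x : A} (h : (n : A) * x = 0) :
    x = 0 := by
  have hu : IsUnit (n : A) := by
    have : IsUnit (n : ℚ) := by simpa using hn
    simpa using this.map (algebraMap ℚ A)
  exact (hu.mul_right_eq_zero).mp h

theorem selfadjoint_iff [Algebra ℚ A] {T : ℤ → A} (hT : OrdLE 0 T) (hT0 : T 0 = 1) :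
    adjM δ T = T ↔ ∀ a : ℕ, alt δ T (2 * a + 1) (-1) = 0 := by
  have hadj : ∀ a : ℕ, adjM δ (alt δ T (2 * a + 1)) = alt δ (adjM δ T) (2 * a + 1) := by
    intro a
    rw [adjM_alt hT]
    have : sg (((2 * a + 1 : ℕ) : ℤ) + 1) = 1 := by
      unfold sg
      rw [if_pos]
      exact ⟨a + 1, by push_cast; ring⟩
    rw [this, one_smul]
  constructor
  · intro h a
    have h1 := adjM_residue (δ := δ) (ordLE_alt (δ := δ) hT (2 * a + 1))
    rw [hadj, h] at h1
    refine eq_zero_of_natCast_mul two_ne_zero ?_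
    push_cast
    linear_combination h1
  · intro h
    have hS := hT.adj (δ := δ)
    have hS0 : adjM δ T 0 = 1 := by rw [adjM_lead hT, hT0]; simp [sg]
    -- The leading coefficient `v` of `T - T^*` is killed one order at a time.
    have key : ∀ n : ℕ, OrdLE (-n) (T - adjM δ T) := by
      intro n
      induction n with
      | zero => simpa using hT.sub hS
      | succ n ih =>
        have hv : (T - adjM δ T) (-n) = 0 := by
          rcases Nat.even_or_odd' n with ⟨j, rfl | rfl⟩
          · have h1 := adjM_lead (δ := δ) ih
            have h2 : adjM δ (T - adjM δ T) = -(T - adjM δ T) := by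
              have := adjM_zsmul (δ := δ) hS (-1)
              rw [neg_one_smul, neg_one_smul, adjM_adjM hT] at this
              rw [sub_eq_add_neg, adjM_add hT hS.neg, this]
              abel
            have h3 : sg (-((2 * j : ℕ) : ℤ)) = 1 := by
              unfold sg; rw [if_pos]
              exact ⟨-j, by push_cast; ring⟩
            rw [h2, h3, one_smul, Pi.neg_apply] at h1
            refine eq_zero_of_natCast_mul two_ne_zero ?_
            push_cast at h1 ⊢
            linear_combination -h1
          · have h1 := (alt_sub (δ := δ) hT hS hT0 hS0 ih (2 * j + 1)).2
            have h2 := adjM_residue (δ := δ) (ordLE_alt (δ := δ) hT (2 * j + 1))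
            rw [hadj, h j] at h2
            rw [show -((2 * j + 1 : ℕ) : ℤ) + ((2 * j + 1 : ℕ) : ℤ) - 1 = -1 by ring,
              Pi.sub_apply, h j, h2] at h1
            exact eq_zero_of_natCast_mul (n := 2 * j + 1) (by omega) (by rw [← h1]; simp)
        intro i hi
        by_cases hin : i = -n
        · rw [hin, hv]
        · exact ih i (by push_cast at hi; omega)
    funext i
    have := key (i.natAbs + 1) i (by omega)
    exact (sub_eq_zero.mp this).symm

end Bounded

/-- for `P = D + u₁D^{-1} + u₂D^{-2} + ⋯`, the constraint `P* = -D P D^{-1}` is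
equivalent to the vanishing of the free term (the coefficient of `D^0`, i.e. `(P^k)₊(1)`)
of `P^k` for every odd positive `k`. -/
theorem adj_iff_free_terms_vanish {A : Type*} [CommRing A] [Algebra ℚ A] (d : A → A)
    (hd : IsDeriv d) (P : ℤ → A)
    (h1 : P 1 = 1) (h0 : P 0 = 0) (htop : ∀ i : ℤ, 1 < i → P i = 0) :
    (adjM d P = fun s => -(mulM d (Dk 1) (mulM d P Dinv) s))
      ↔ ∀ a : ℕ, powM d P (2 * a + 1) 0 = 0 := by
  let δ : Derivation ℤ A A :=
    Derivation.mk' (AddMonoidHom.mk' d hd.1).toIntLinearMap fun a b => by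
      simp [hd.2, mul_comm, add_comm]
  have hδ : d = ⇑δ := rfl
  have hP : OrdLE 1 P := htop
  have hT : OrdLE 0 (fun s => P (s + 1)) := fun i hi => hP _ (by omega)
  rw [hδ, adj_condition_iff hP, selfadjoint_iff hT (by simp [h1])]
  simp only [powM_eq_alt hP, zero_sub]
end
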